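/- Let p_v = 2^{-𝒩_V(v)·(n+5)} for every vertex v ≠ s of 𝔅_n, and let π_0' be the twin policy of π_0. Then LargestIncrease(𝔇_n, π_0') performs at least 2^n − 1 improving switches before terminating. -/

import Mathlib

/-! ## The Markov decision process `𝔅_n` -/

/-- Vertices of the MDP `𝔅_n`: a transportation vertex `t`, a sink `s`, a dummy vertex `d`,
and vertices `a i`, `b i` for `i ∈ {1,…,n}`. -/
inductive BV : Type where
  | t : BV
  | s : BV
  | d : BV
  | a : ℕ → BV
  | b : ℕ → BV
deriving DecidableEq

/-- The vertex `a i` for `i ∈ {1,…,n+1}`, with the convention `a (n+1) = s`. -/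
def aN (n i : ℕ) : BV := if i = n + 1 then BV.s else BV.a i

/-- The vertex `b i` for `i ∈ {1,…,n+1}`, with the convention `b (n+1) = d`. -/
def bN (n i : ℕ) : BV := if i = n + 1 then BV.d else BV.b i

/-- The vertex set of `𝔅_n`. -/
def IsBVertex (n : ℕ) : BV → Prop
  | BV.t => True
  | BV.s => True
  | BV.d => True
  | BV.a i => 1 ≤ i ∧ i ≤ n
  | BV.b i => 1 ≤ i ∧ i ≤ n

/-- The edge relation of `𝔅_n`: travel, enter, skip, board, stay, leave edges,
the edge `(d,s)` and the self-loop `(s,s)`. -/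
def BEdge (n : ℕ) (u v : BV) : Prop :=
  (∃ i, 1 ≤ i ∧ i ≤ n ∧ u = BV.t ∧ v = BV.a i) ∨
  (∃ i, 1 ≤ i ∧ i ≤ n ∧ u = BV.a i ∧ v = BV.b i) ∨
  (∃ i, 1 ≤ i ∧ i ≤ n ∧ u = BV.a i ∧ v = aN n (i + 1)) ∨
  (∃ i, 1 ≤ i ∧ i ≤ n ∧ u = BV.a i ∧ v = BV.t) ∨
  (∃ i, 1 ≤ i ∧ i ≤ n ∧ u = BV.b i ∧ v = bN n (i + 1)) ∨
  (∃ i, 1 ≤ i ∧ i ≤ n ∧ u = BV.b i ∧ v = aN n (i + 1)) ∨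
  (u = BV.d ∧ v = BV.s) ∨ (u = BV.s ∧ v = BV.s)

/-- The reward function of `𝔅_n`: `r(enter i) = 2^i`, `r(stay i) = 3/4`,
`r(board i) = -2^i + 5/4`, and reward `0` on all other edges. -/
def rB (n : ℕ) (u v : BV) : ℚ :=
  match u, v with
  | BV.a i, BV.b j => if i = j then 2 ^ i else 0
  | BV.a i, BV.t => -(2 ^ i) + 5 / 4
  | BV.b i, BV.b j => if j = i + 1 then 3 / 4 else 0
  | BV.b i, BV.d => if i = n then 3 / 4 else 0
  | _, _ => 0

/-- A policy for `𝔅_n` chooses an outgoing edge at every vertex. -/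
def IsBPolicy (n : ℕ) (π : BV → BV) : Prop := ∀ u, IsBVertex n u → BEdge n u (π u)

/-- A policy is weak unichain if it reaches the sink `s` from every vertex. -/
def BWeakUnichain (n : ℕ) (π : BV → BV) : Prop :=
  ∀ u, IsBVertex n u → ∃ k, π^[k] u = BV.s

open Classical in
/-- The value of a vertex `v` w.r.t. a (weak unichain) policy `π`:
the sum of the rewards along the path that `π` takes from `v` to the sink `s`. -/
noncomputable def BVal (n : ℕ) (π : BV → BV) (v : BV) : ℚ :=
  if h : ∃ k, π^[k] v = BV.s then
    ∑ i ∈ Finset.range (Nat.find h), rB n (π^[i] v) (π^[i + 1] v)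
  else 0

/-- The reduced costs of the edge `(u,v)` w.r.t. the policy `π`. -/
noncomputable def zB (n : ℕ) (π : BV → BV) (u v : BV) : ℚ :=
  rB n u v + BVal n π v - BVal n π u

/-- The edge `(u,v)` is an improving switch for `π` if its reduced costs are positive. -/
def BImproving (n : ℕ) (π : BV → BV) (u v : BV) : Prop :=
  BEdge n u v ∧ 0 < zB n π u v

/-- The Bland numbering `𝒩_{𝔅_n}` of the edges of `𝔅_n`. -/
def NB (n : ℕ) (u v : BV) : ℕ :=
  match u, v with
  | BV.t, BV.a i => i
  | BV.a i, BV.b _ => n + 1 + 5 * (i - 1)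
  | BV.a i, BV.a _ => n + 2 + 5 * (i - 1)
  | BV.a i, BV.s => n + 2 + 5 * (i - 1)
  | BV.a i, BV.t => n + 3 + 5 * (i - 1)
  | BV.b i, BV.b _ => n + 4 + 5 * (i - 1)
  | BV.b i, BV.d => n + 4 + 5 * (i - 1)
  | BV.b i, BV.a _ => n + 5 + 5 * (i - 1)
  | BV.b i, BV.s => n + 5 + 5 * (i - 1)
  | BV.d, BV.s => 6 * n + 1
  | BV.s, BV.s => 6 * n + 2
  | _, _ => 0

/-- One step of Bland's policy iteration with edge numbering `N`:
apply the improving switch with the smallest number. -/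
def IsBlandStep (n : ℕ) (N : BV → BV → ℕ) (π π' : BV → BV) : Prop :=
  ∃ u v, BImproving n π u v ∧ (∀ u' v', BImproving n π u' v' → N u v ≤ N u' v') ∧
    π' = Function.update π u v

/-- `BlandReaches n N π ψ` says that Bland's policy iteration started at `π` visits `ψ`. -/
def BlandReaches (n : ℕ) (N : BV → BV → ℕ) : (BV → BV) → (BV → BV) → Prop :=
  Relation.ReflTransGen (IsBlandStep n N)

/-- The canonical policy `π_0` for `0`: `travel 1`, `skip i` and `leave i` are active. -/
def pi0 (n : ℕ) : BV → BV := fun u =>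
  match u with
  | BV.t => BV.a 1
  | BV.a i => aN n (i + 1)
  | BV.b i => aN n (i + 1)
  | BV.d => BV.s
  | BV.s => BV.s

/-- The optimal policy `π_*`: `travel 1`, `enter i` for all `i`, `leave j` for `j < n`,
and `stay n` are active. -/
def piStar (n : ℕ) : BV → BV := fun u =>
  match u with
  | BV.t => BV.a 1
  | BV.a i => BV.b i
  | BV.b i => if i = n then BV.d else BV.a (i + 1)
  | BV.d => BV.s
  | BV.s => BV.s

/-! ## Bits and canonical policies -/

/-- The least significant set bit `ℓ_1(x)` (1-based). -/
noncomputable def lsb (x : ℕ) : ℕ := sInf {i | 1 ≤ i ∧ Nat.testBit x (i - 1)}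

/-- The most significant set bit `m(x)` (1-based). -/
noncomputable def msb1 (x : ℕ) : ℕ := sSup {i | 1 ≤ i ∧ Nat.testBit x (i - 1)}

/-- The least unset bit `ℓ_0(x)` (1-based). -/
noncomputable def lzero (x : ℕ) : ℕ := sInf {i | 1 ≤ i ∧ ¬ Nat.testBit x (i - 1)}

/-- `L_i(x) = max { j ≤ i-2 | x_j = 1 or j = 1 }` (1-based bits). -/
noncomputable def Lfun (i x : ℕ) : ℕ :=
  sSup {j | 1 ≤ j ∧ j ≤ i - 2 ∧ (Nat.testBit x (j - 1) ∨ j = 1)}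

/-- `IsCanonical n x π` says that `π` is the canonical policy `π_x` for `x`. -/
noncomputable def IsCanonical (n x : ℕ) (π : BV → BV) : Prop :=
  IsBPolicy n π ∧
  if x = 0 then
    π BV.t = BV.a 1 ∧
      ∀ i, 1 ≤ i → i ≤ n → π (BV.a i) = aN n (i + 1) ∧ π (BV.b i) = aN n (i + 1)
  else
    π BV.t = BV.a (lsb x) ∧
    π (BV.b (msb1 x)) = aN n (msb1 x + 1) ∧
    (∀ i, msb1 x < i → i ≤ n → π (BV.a i) = aN n (i + 1) ∧ π (BV.b i) = aN n (i + 1)) ∧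
    ∀ i, 1 ≤ i → i ≤ n → Nat.testBit x (i - 1) →
      π (BV.a i) = BV.b i ∧
      (i = 2 → π (BV.b 1) = BV.a 2 ∧ (¬ Nat.testBit x 0 → π (BV.a 1) = BV.a 2)) ∧
      (3 ≤ i → Nat.testBit x (i - 2) → π (BV.b (i - 1)) = BV.a i) ∧
      (3 ≤ i → ¬ Nat.testBit x (i - 2) →
        π (BV.b (i - 1)) = BV.b i ∧ π (BV.a (i - 1)) = BV.a i ∧
        π (BV.b (i - 2)) = BV.a (i - 1) ∧
        (Lfun i x < i - 2 →
          ∀ j, Lfun i x + 1 ≤ j → j ≤ i - 2 →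
            π (BV.a j) = BV.t ∧ π (BV.b (j - 1)) = BV.b j) ∧
        (Lfun i x = 1 → ¬ Nat.testBit x 0 → π (BV.a 1) = BV.t))

/-- Activating a list of edges in a policy, from left to right. -/
def activateList (π : BV → BV) (L : List (BV × BV)) : BV → BV :=
  L.foldl (fun σ e => Function.update σ e.1 e.2) π

/-- The canonical phases w.r.t. an odd number `x` (with `ℓ := ℓ_0(x)`), as a list of edges
to be activated in order. -/
noncomputable def phaseList (n x : ℕ) : List (BV × BV) :=
  let ℓ := lzero x
  (if Nat.testBit x ℓ then [(BV.b ℓ, aN n (ℓ + 1))] else []) ++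
  (if Nat.testBit x ℓ ∨ msb1 x < ℓ then [(BV.b (ℓ - 1), BV.b ℓ)] else []) ++
  [(BV.a ℓ, BV.b ℓ), (BV.t, BV.a ℓ)] ++
  ((List.range (ℓ - 2)).map fun j => (BV.a (j + 1), BV.t)) ++
  [(BV.a (ℓ - 1), BV.a ℓ)] ++
  (((List.range (ℓ - 3)).reverse).map fun j => (BV.b (j + 1), BV.b (j + 2))) ++
  (if ℓ = 2 then [(BV.b 1, BV.a 2)] else [])

/-! ## The Markov decision process `𝔇_n` -/

/-- Vertices of `𝔇_n`: the original vertices (`base`), and for every edge `(v,w)` of `𝔅_n`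
other than the self-loop, the gadget vertices `x v w`, `y v w`, `z v w`. -/
inductive DV : Type where
  | base : BV → DV
  | x : BV → BV → DV
  | y : BV → BV → DV
  | z : BV → BV → DV
deriving DecidableEq

/-- The edges of `𝔅_n` that get replaced by gadgets (all edges except the self-loop `(s,s)`). -/
def DEdgePair (n : ℕ) (v w : BV) : Prop := BEdge n v w ∧ v ≠ BV.s

/-- The vertex set of `𝔇_n`. -/
def IsDVertex (n : ℕ) : DV → Prop
  | DV.base v => IsBVertex n v
  | DV.x v w => DEdgePair n v w
  | DV.y v w => DEdgePair n v w
  | DV.z v w => DEdgePair n v w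

/-- The agent vertices of `𝔇_n` (all vertices except the randomization vertices `y v w`). -/
def IsDAgent (n : ℕ) : DV → Prop
  | DV.base v => IsBVertex n v
  | DV.x v w => DEdgePair n v w
  | DV.y _ _ => False
  | DV.z v w => DEdgePair n v w

/-- The agent edges of `𝔇_n`. -/
def DEdge (n : ℕ) (u u' : DV) : Prop :=
  (∃ v w, DEdgePair n v w ∧
    ((u = DV.base v ∧ u' = DV.x v w) ∨ (u = DV.x v w ∧ u' = DV.base v) ∨
     (u = DV.x v w ∧ u' = DV.y v w) ∨ (u = DV.z v w ∧ u' = DV.base w))) ∨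
  (u = DV.base BV.s ∧ u' = DV.base BV.s)

/-- The reward function of `𝔇_n`: the edge `(z v w, w)` carries the reward of the original
edge `(v,w)`; all other agent edges have reward `0`. -/
def rD (n : ℕ) (u u' : DV) : ℚ :=
  match u, u' with
  | DV.z v w, DV.base w' => if w' = w then rB n v w else 0
  | _, _ => 0

/-- A policy for `𝔇_n` chooses an outgoing agent edge at every agent vertex. -/
def IsDPolicy (n : ℕ) (π : DV → DV) : Prop := ∀ u, IsDAgent n u → DEdge n u (π u)

/-- `IsDVal n p π V` says that `V` satisfies the Bellman equations characterizing the value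
function of the policy `π` for `𝔇_n` with probabilities `p`, with `V s = 0`. -/
def IsDVal (n : ℕ) (p : BV → ℚ) (π : DV → DV) (V : DV → ℚ) : Prop :=
  V (DV.base BV.s) = 0 ∧
  (∀ u, IsDAgent n u → V u = rD n u (π u) + V (π u)) ∧
  (∀ v w, DEdgePair n v w →
    V (DV.y v w) = p v * V (DV.z v w) + (1 - p v) * V (DV.base v))

open Classical in
/-- The value function of a (weak unichain) policy `π` for `𝔇_n`: the unique solution of the
Bellman equations (normalized to `0` outside the vertex set). -/
noncomputable def DVal (n : ℕ) (p : BV → ℚ) (π : DV → DV) : DV → ℚ :=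
  if h : ∃! V : DV → ℚ, IsDVal n p π V ∧ ∀ u, ¬ IsDVertex n u → V u = 0 then
    h.exists.choose
  else fun _ => 0

/-- The reduced costs of an agent edge `(u,u')` of `𝔇_n` w.r.t. the policy `π`. -/
noncomputable def zD (n : ℕ) (p : BV → ℚ) (π : DV → DV) (u u' : DV) : ℚ :=
  rD n u u' + DVal n p π u' - DVal n p π u

/-- An agent edge of `𝔇_n` is an improving switch if its reduced costs are positive. -/
def DImproving (n : ℕ) (p : BV → ℚ) (π : DV → DV) (u u' : DV) : Prop :=
  DEdge n u u' ∧ 0 < zD n p π u u'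

/-- One (agent or positive-probability randomization) step of the process `𝔇_n` under `π`. -/
def DStep (n : ℕ) (p : BV → ℚ) (π : DV → DV) (u u' : DV) : Prop :=
  (IsDAgent n u ∧ u' = π u) ∨
  (∃ v w, DEdgePair n v w ∧ u = DV.y v w ∧
    ((u' = DV.z v w ∧ 0 < p v) ∨ (u' = DV.base v ∧ 0 < 1 - p v)))

/-- A policy for `𝔇_n` is weak unichain if it reaches `s` with probability one from every
vertex, i.e. `s` is reachable via active/positive-probability steps from every vertex. -/
def DWeakUnichain (n : ℕ) (p : BV → ℚ) (π : DV → DV) : Prop :=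
  ∀ u, IsDVertex n u → Relation.ReflTransGen (DStep n p π) u (DV.base BV.s)

/-- The twin policy of a policy `π` for `𝔅_n`: every vertex `v ≠ s` is `π v`-oriented. -/
def twin (π : BV → BV) : DV → DV := fun u =>
  match u with
  | DV.base v => if v = BV.s then DV.base BV.s else DV.x v (π v)
  | DV.x v w => if w = π v then DV.y v w else DV.base v
  | DV.y v w => DV.y v w
  | DV.z _ w => DV.base w

/-- The vertex numbering `𝒩_V` of `𝔅_n`: the order `(t, a 1, b 1, a 2, b 2, …, a n, b n, d, s)`. -/
def NV (n : ℕ) : BV → ℕ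
  | BV.t => 1
  | BV.a i => 2 * i
  | BV.b i => 2 * i + 1
  | BV.d => 2 * n + 2
  | BV.s => 2 * n + 3

/-- The specific probabilities `p_v = 2^{-𝒩_V(v)·(n+5)}`. -/
noncomputable def pSpec (n : ℕ) (v : BV) : ℚ := (2 : ℚ) ^ (-((NV n v * (n + 5) : ℕ) : ℤ))

/-- The set `B(v)` of agent edges of `𝔇_n` belonging to the vertex `v`. -/
def Belongs (n : ℕ) (v : BV) (e : DV × DV) : Prop :=
  ∃ w, DEdgePair n v w ∧
    (e = (DV.x v w, DV.y v w) ∨ e = (DV.base v, DV.x v w) ∨ e = (DV.x v w, DV.base v))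

/-- Applying the improving switch `e` to the policy `π` yields `π'`. -/
def DApply (n : ℕ) (p : BV → ℚ) (π : DV → DV) (e : DV × DV) (π' : DV → DV) : Prop :=
  DImproving n p π e.1 e.2 ∧ π' = Function.update π e.1 e.2

/-- One step of Bland's policy iteration on `𝔇_n` with edge numbering `N`. -/
def IsBlandStepD (n : ℕ) (p : BV → ℚ) (N : DV → DV → ℕ) (π π' : DV → DV) : Prop :=
  ∃ u u', DImproving n p π u u' ∧ (∀ a b, DImproving n p π a b → N u u' ≤ N a b) ∧
    π' = Function.update π u u'

/-- One step of Dantzig's policy iteration on `𝔇_n`: apply an improving switch of maximal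
reduced costs. -/
def DantzigStep (n : ℕ) (p : BV → ℚ) (π π' : DV → DV) : Prop :=
  ∃ u u', DImproving n p π u u' ∧
    (∀ a b, DImproving n p π a b → zD n p π a b ≤ zD n p π u u') ∧
    π' = Function.update π u u'

/-- The finite set of vertices of `𝔅_n`, as a `Finset`. -/
noncomputable def BVSet (n : ℕ) : Finset BV :=
  {BV.t, BV.d, BV.s} ∪ (Finset.Icc 1 n).image BV.a ∪ (Finset.Icc 1 n).image BV.b

/-- The finite set of agent vertices of `𝔇_n`, as a `Finset`. -/
noncomputable def DAgentSet (n : ℕ) : Finset DV := by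
  classical
  exact ((BVSet n).image DV.base) ∪
    (((BVSet n ×ˢ BVSet n).filter fun e => DEdgePair n e.1 e.2).image fun e => DV.x e.1 e.2) ∪
    (((BVSet n ×ˢ BVSet n).filter fun e => DEdgePair n e.1 e.2).image fun e => DV.z e.1 e.2)

/-- The objective of the Largest Increase rule: the sum of the values of all agent vertices. -/
noncomputable def LIobj (n : ℕ) (p : BV → ℚ) (π : DV → DV) : ℚ :=
  ∑ u ∈ DAgentSet n, DVal n p π u

/-- One step of the Largest Increase policy iteration on `𝔇_n`: apply an improving switch
maximizing the sum of all agent vertex values of the resulting policy. -/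
def LIStep (n : ℕ) (p : BV → ℚ) (π π' : DV → DV) : Prop :=
  ∃ u u', DImproving n p π u u' ∧
    (∀ a b, DImproving n p π a b →
      LIobj n p (Function.update π a b) ≤ LIobj n p (Function.update π u u')) ∧
    π' = Function.update π u u'

/-- `N` is a Bland numbering `𝒩_{𝔇_n}` for `𝔇_n`: it is injective on agent edges, the edges
`(x v w, v)` all come first, within each gadget `(x v w, y v w)` precedes `(v, x v w)`,
the gadget blocks are ordered according to `𝒩_{𝔅_n}`, and the self-loop comes last. -/
def IsDBlandNumbering (n : ℕ) (N : DV → DV → ℕ) : Prop :=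
  (∀ u₁ u₂ u₁' u₂', DEdge n u₁ u₂ → DEdge n u₁' u₂' → N u₁ u₂ = N u₁' u₂' →
    u₁ = u₁' ∧ u₂ = u₂') ∧
  (∀ v w v' w', DEdgePair n v w → DEdgePair n v' w' →
    N (DV.x v w) (DV.base v) < N (DV.x v' w') (DV.y v' w')) ∧
  (∀ v w, DEdgePair n v w → N (DV.x v w) (DV.y v w) < N (DV.base v) (DV.x v w)) ∧
  (∀ v w v' w', DEdgePair n v w → DEdgePair n v' w' → NB n v w < NB n v' w' →
    N (DV.base v) (DV.x v w) < N (DV.x v' w') (DV.y v' w')) ∧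
  (∀ v w, DEdgePair n v w → N (DV.base v) (DV.x v w) < N (DV.base BV.s) (DV.base BV.s))

/-!
The probabilities `p_v` decay so quickly in the vertex number that a Largest Increase step always
acts at the lowest vertex where something can be gained: all nonzero reduced costs of the policies
visited lie between `1/4` and `2^(n+2)` in absolute value. Such a step either switches off the
gadget of an edge with negative reduced costs, which leaves the underlying policy for `𝔅_n` alone,
or it switches on the gadget of a best improving edge of the lowest improvable vertex, and then the
next step applies that edge, since every other step would gain less than `1/4`.

Progress is measured by the counter value: the total reward of the path from `t` to `s`, with the
reward `3/4` of the stay edges replaced by `0`. On the canonical policy for `x` it equals `2 * x`.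
An improving switch of largest reduced costs at the lowest improvable vertex raises it by at most
`2`, and such a switch takes two steps in `𝔇_n`; hence it never exceeds the number of steps
performed. It starts at `0`, and it is at least `2^(n+1) - 2` for an optimal policy.
-/

namespace LargestIncrease

/-! ## Edges of `𝔅_n` -/

section Edges

variable {n i : ℕ} {u v : BV}

theorem bEdge_t : BEdge n BV.t v ↔ ∃ i, 1 ≤ i ∧ i ≤ n ∧ v = BV.a i := by simp [BEdge]

theorem bEdge_a :
    BEdge n (BV.a i) v ↔ (1 ≤ i ∧ i ≤ n) ∧ (v = BV.b i ∨ v = aN n (i + 1) ∨ v = BV.t) := by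
  simp [BEdge]; grind

theorem bEdge_b :
    BEdge n (BV.b i) v ↔ (1 ≤ i ∧ i ≤ n) ∧ (v = bN n (i + 1) ∨ v = aN n (i + 1)) := by
  simp [BEdge]; grind

theorem bEdge_d : BEdge n BV.d v ↔ v = BV.s := by simp [BEdge]

theorem bEdge_s : BEdge n BV.s v ↔ v = BV.s := by simp [BEdge]

theorem source_of_bEdge_t (h : BEdge n u BV.t) : ∃ i, u = BV.a i := by
  cases u <;> simp [BEdge, aN, bN] at h ⊢; grind

theorem source_of_bEdge_a (h : BEdge n u (BV.a i)) :
    u = BV.t ∨ ∃ j, 1 ≤ j ∧ i = j + 1 ∧ (u = BV.a j ∨ u = BV.b j) := by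
  cases u <;> simp [BEdge, aN, bN] at h ⊢ <;> grind

theorem source_of_bEdge_b (h : BEdge n u (BV.b i)) :
    u = BV.a i ∨ ∃ j, 1 ≤ j ∧ i = j + 1 ∧ u = BV.b j := by
  cases u <;> simp [BEdge, aN, bN] at h ⊢ <;> grind

theorem aN_of_le (hi : i ≤ n) : aN n i = BV.a i := if_neg (by omega)

theorem bN_of_le (hi : i ≤ n) : bN n i = BV.b i := if_neg (by omega)

theorem aN_top : aN n (n + 1) = BV.s := if_pos rfl

theorem bN_top : bN n (n + 1) = BV.d := if_pos rfl

theorem isBVertex_aN (h1 : 1 ≤ i) (hi : i ≤ n + 1) : IsBVertex n (aN n i) := by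
  unfold aN; split_ifs
  · trivial
  · exact ⟨h1, by omega⟩

theorem isBVertex_bN (h1 : 1 ≤ i) (hi : i ≤ n + 1) : IsBVertex n (bN n i) := by
  unfold bN; split_ifs
  · trivial
  · exact ⟨h1, by omega⟩

theorem isBVertex_source (h : BEdge n u v) : IsBVertex n u := by
  cases u with
  | a i => exact (bEdge_a.1 h).1
  | b i => exact (bEdge_b.1 h).1
  | _ => trivial

theorem isBVertex_target (h : BEdge n u v) : IsBVertex n v := by
  cases u with
  | t => obtain ⟨i, h1, hi, rfl⟩ := bEdge_t.1 h; exact ⟨h1, hi⟩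
  | a i =>
    obtain ⟨⟨h1, hi⟩, rfl | rfl | rfl⟩ := bEdge_a.1 h
    exacts [⟨h1, hi⟩, isBVertex_aN (by omega) (by omega), trivial]
  | b i =>
    obtain ⟨⟨h1, hi⟩, rfl | rfl⟩ := bEdge_b.1 h
    exacts [isBVertex_bN (by omega) (by omega), isBVertex_aN (by omega) (by omega)]
  | d => rw [bEdge_d.1 h]; trivial
  | s => rw [bEdge_s.1 h]; trivial

theorem rB_enter : rB n (BV.a i) (BV.b i) = 2 ^ i := if_pos rfl

theorem rB_skip : rB n (BV.a i) (aN n (i + 1)) = 0 := by unfold aN; split_ifs <;> rfl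

theorem rB_board : rB n (BV.a i) BV.t = -(2 ^ i) + 5 / 4 := rfl

theorem rB_stay : rB n (BV.b i) (bN n (i + 1)) = 3 / 4 := by
  unfold bN; split_ifs with h
  · exact if_pos (by omega)
  · exact if_pos rfl

theorem rB_leave : rB n (BV.b i) (aN n (i + 1)) = 0 := by unfold aN; split_ifs <;> rfl

theorem two_le_two_pow (hi : 1 ≤ i) : (2 : ℚ) ≤ 2 ^ i := le_self_pow₀ (by norm_num) (by omega)

/-- A potential bounding rewards: `rB n u v ≤ potential n u - potential n v` on every edge, with
slack `3/4` on the boarding edges. -/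
def potential (n : ℕ) : BV → ℚ
  | BV.t => 0
  | BV.a i => 2 - 2 ^ i
  | BV.b i => 2 - 2 ^ (i + 1)
  | BV.d => 1 / 2 - 2 ^ (n + 1)
  | BV.s => 1 / 2 - 2 ^ (n + 1)

/-- The rewards of `𝔅_n` with the stay edges made worthless. Along the path of the canonical
policy for `x`, these rewards sum up to `2 * x`. -/
def counterReward (n : ℕ) (u v : BV) : ℚ :=
  match u with
  | BV.b _ => 0
  | _ => rB n u v

/-- A refinement of `potential` that bounds the rewards strictly. -/
def strictPotential (n : ℕ) (v : BV) : ℚ := potential n v - NV n v / (4 * (n + 1))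

theorem potential_t : potential n BV.t = 0 := rfl

theorem potential_a : potential n (BV.a i) = 2 - 2 ^ i := rfl

theorem potential_b : potential n (BV.b i) = 2 - 2 ^ (i + 1) := rfl

theorem potential_aN_le (n i : ℕ) : potential n (aN n i) ≤ 2 - 2 ^ i := by
  unfold aN; split_ifs with h
  · subst h; simp only [potential]; linarith
  · rfl

theorem potential_bN_le (h1 : 1 ≤ i) : potential n (bN n i) ≤ 1 / 2 - 2 ^ i := by
  unfold bN; split_ifs with h
  · subst h; rfl
  · have := two_le_two_pow h1
    rw [potential_b, pow_succ]; linarith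

theorem counterReward_le_rB (h : BEdge n u v) : counterReward n u v ≤ rB n u v := by
  cases u with
  | b i =>
    obtain ⟨-, rfl | rfl⟩ := bEdge_b.1 h
    · rw [rB_stay]; norm_num [counterReward]
    · rw [rB_leave]; rfl
  | _ => rfl

theorem two_mul_rB_sub_counterReward_le (h : BEdge n u v) :
    2 * rB n u v - counterReward n u v ≤ potential n u - potential n v := by
  cases u with
  | t =>
    obtain ⟨i, h1, -, rfl⟩ := bEdge_t.1 h
    have := two_le_two_pow h1
    simp only [rB, counterReward, potential]; linarith
  | a i =>
    obtain ⟨⟨h1, -⟩, rfl | rfl | rfl⟩ := bEdge_a.1 h <;> simp only [counterReward]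
    · simp only [rB_enter, potential, pow_succ]; linarith
    · have := two_le_two_pow h1
      have := potential_aN_le n (i + 1)
      rw [pow_succ] at this
      rw [rB_skip, potential_a]; linarith
    · rw [rB_board, potential_a, potential_t]; linarith
  | b i =>
    obtain ⟨⟨h1, -⟩, rfl | rfl⟩ := bEdge_b.1 h <;> simp only [counterReward]
    · have := potential_bN_le (n := n) (show 1 ≤ i + 1 by omega)
      rw [rB_stay, potential_b]; linarith
    · have := potential_aN_le n (i + 1)
      rw [rB_leave, potential_b]; linarith
  | d => rw [bEdge_d.1 h]; simp [rB, counterReward, potential]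
  | s => rw [bEdge_s.1 h]; simp [rB, counterReward]

theorem rB_le_potential_sub (h : BEdge n u v) : rB n u v ≤ potential n u - potential n v := by
  linarith [two_mul_rB_sub_counterReward_le h, counterReward_le_rB h]

theorem NV_lt_NV_of_bEdge (h : BEdge n u v) (hu : u ≠ BV.s) (hv : v ≠ BV.t) : NV n u < NV n v := by
  cases u with
  | t => obtain ⟨i, _, _, rfl⟩ := bEdge_t.1 h; simp only [NV]; omega
  | a i =>
    obtain ⟨_, rfl | rfl | rfl⟩ := bEdge_a.1 h
    · simp [NV]
    · unfold aN; split_ifs <;> simp only [NV] <;> omega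
    · exact absurd rfl hv
  | b i =>
    obtain ⟨_, rfl | rfl⟩ := bEdge_b.1 h
    · unfold bN; split_ifs <;> simp only [NV] <;> omega
    · unfold aN; split_ifs <;> simp only [NV] <;> omega
  | d => rw [bEdge_d.1 h]; simp [NV]
  | s => exact absurd rfl hu

theorem NV_inj (hu : IsBVertex n u) (hv : IsBVertex n v) (h : NV n u = NV n v) : u = v := by
  cases u <;> cases v <;> simp [NV, IsBVertex] at * <;> omega

theorem rB_lt_strictPotential_sub (h : BEdge n u v) (hu : u ≠ BV.s) :
    rB n u v < strictPotential n u - strictPotential n v := by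
  have hn : (0 : ℚ) < 4 * (n + 1) := by positivity
  have hφ := rB_le_potential_sub h
  by_cases hv : v = BV.t
  · subst hv
    obtain ⟨i, rfl⟩ := source_of_bEdge_t h
    obtain ⟨⟨-, hi⟩, -⟩ := bEdge_a.1 h
    have hlt : (2 * i : ℚ) / (4 * (n + 1)) < 3 / 4 := by
      rw [div_lt_iff₀ hn]
      have : (i : ℚ) ≤ n := by exact_mod_cast hi
      linarith
    have hpos : 0 < 1 / (4 * ((n : ℚ) + 1)) := by positivity
    simp only [rB_board, strictPotential, potential, NV]
    push_cast
    linarith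
  · have hNV : (NV n u : ℚ) < NV n v := by exact_mod_cast NV_lt_NV_of_bEdge h hu hv
    have := div_lt_div_of_pos_right hNV hn
    simp only [strictPotential]
    linarith

end Edges

/-! ## Path sums -/

section Paths

variable {r : BV → BV → ℚ} {π : BV → BV} {u v x : BV}

open Classical in
/-- The total `r`-weight of the path that `π` takes from `v` to `s`. The value `BVal` is the case
`r = rB n`. -/
noncomputable def pathSum (r : BV → BV → ℚ) (π : BV → BV) (v : BV) : ℚ :=
  if h : ∃ k, π^[k] v = BV.s then
    ∑ i ∈ Finset.range (Nat.find h), r (π^[i] v) (π^[i + 1] v)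
  else 0

/-- The counter value of a vertex: the total `counterReward` of the path of `π` to `s`. -/
noncomputable abbrev counterVal (n : ℕ) (π : BV → BV) (v : BV) : ℚ :=
  pathSum (counterReward n) π v

/-- `Reaches π u x` says that the path of `π` starting at `u` visits `x`. -/
def Reaches (π : BV → BV) (u x : BV) : Prop := ∃ k, π^[k] u = x

theorem BVal_eq_pathSum (n : ℕ) (π : BV → BV) (v : BV) : BVal n π v = pathSum (rB n) π v := rfl

theorem pathSum_sink (r : BV → BV → ℚ) (π : BV → BV) : pathSum r π BV.s = 0 := by
  have h : ∃ k, π^[k] BV.s = BV.s := ⟨0, rfl⟩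
  rw [pathSum, dif_pos h, (Nat.find_eq_zero h).2 rfl, Finset.sum_range_zero]

theorem pathSum_step (h : Reaches π v BV.s) (hv : v ≠ BV.s) :
    pathSum r π v = r v (π v) + pathSum r π (π v) := by
  classical
  replace h : ∃ k, π^[k] v = BV.s := h
  have h' : ∃ k, π^[k] (π v) = BV.s := by
    obtain ⟨_ | k, hk⟩ := h
    exacts [absurd hk hv, ⟨k, hk⟩]
  have hfind : Nat.find h = Nat.find h' + 1 := Nat.find_comp_succ h h' hv
  have hsum : ∀ a b, a = b + 1 → ∑ i ∈ Finset.range a, r (π^[i] v) (π^[i + 1] v) =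
      r v (π v) + ∑ i ∈ Finset.range b, r (π^[i] (π v)) (π^[i + 1] (π v)) := by
    rintro _ b rfl
    rw [Finset.sum_range_succ', add_comm]
    rfl
  rw [pathSum, dif_pos h, pathSum, dif_pos h']
  exact hsum _ _ (by convert hfind)

theorem Reaches.refl (π : BV → BV) (u : BV) : Reaches π u u := ⟨0, rfl⟩

theorem Reaches.head (h : Reaches π (π u) x) : Reaches π u x := by
  obtain ⟨k, hk⟩ := h
  exact ⟨k + 1, hk⟩

theorem Reaches.tail (h : Reaches π u x) : Reaches π u (π x) := by
  obtain ⟨k, rfl⟩ := h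
  exact ⟨k + 1, Function.iterate_succ_apply' π k u⟩

theorem Reaches.exists_pred (h : Reaches π u x) (hne : u ≠ x) : ∃ y, Reaches π u y ∧ π y = x := by
  obtain ⟨_ | k, hk⟩ := h
  exacts [absurd hk hne, ⟨π^[k] u, ⟨k, rfl⟩, by rw [← hk, Function.iterate_succ_apply']⟩]

@[elab_as_elim]
theorem Reaches.head_induction {motive : BV → Prop} (h : Reaches π u x) (refl : motive x)
    (head : ∀ y, Reaches π y x → motive (π y) → motive y) : motive u := by
  obtain ⟨k, hk⟩ := h
  induction k generalizing u with
  | zero => rwa [← hk] at refl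
  | succ k ih => exact head u ⟨k + 1, hk⟩ (ih hk)

end Paths

/-! ## Proper policies -/

/-- Proper policies: the weak unichain policies for `𝔅_n`. -/
structure ProperPolicy (n : ℕ) (π : BV → BV) : Prop where
  isBPolicy : IsBPolicy n π
  unichain : BWeakUnichain n π

section Proper

variable {n : ℕ} {r : BV → BV → ℚ} {g F : BV → ℚ} {π : BV → BV} {u v w x : BV}

theorem ProperPolicy.apply_s (hπ : ProperPolicy n π) : π BV.s = BV.s :=
  bEdge_s.1 (hπ.isBPolicy BV.s trivial)

theorem ProperPolicy.isBVertex_apply (hπ : ProperPolicy n π) (hu : IsBVertex n u) :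
    IsBVertex n (π u) :=
  isBVertex_target (hπ.isBPolicy u hu)

theorem ProperPolicy.isBVertex_of_reaches (hπ : ProperPolicy n π) (hu : IsBVertex n u)
    (h : Reaches π u x) : IsBVertex n x := by
  obtain ⟨k, rfl⟩ := h
  induction k with
  | zero => exact hu
  | succ k ih => rw [Function.iterate_succ_apply']; exact hπ.isBVertex_apply ih

theorem ProperPolicy.not_reaches_of_s (hπ : ProperPolicy n π) (hx : x ≠ BV.s) :
    ¬ Reaches π BV.s x := by
  rintro ⟨k, rfl⟩
  exact hx (Function.iterate_fixed hπ.apply_s k)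

theorem ProperPolicy.pathSum_eq (hπ : ProperPolicy n π) (hv : IsBVertex n v) (hs : v ≠ BV.s) :
    pathSum r π v = r v (π v) + pathSum r π (π v) :=
  pathSum_step (hπ.unichain v hv) hs

@[elab_as_elim]
theorem ProperPolicy.path_induction (hπ : ProperPolicy n π) {motive : ∀ v, IsBVertex n v → Prop}
    (sink : motive BV.s trivial)
    (step : ∀ v (hv : IsBVertex n v), v ≠ BV.s → motive (π v) (hπ.isBVertex_apply hv) → motive v hv)
    (v : BV) (hv : IsBVertex n v) : motive v hv := by
  refine Reaches.head_induction (motive := fun v => ∀ hv, motive v hv) (hπ.unichain v hv)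
    (fun _ => sink) (fun y _ ih hy => ?_) hv
  by_cases hs : y = BV.s
  · subst hs; exact sink
  · exact step y hy hs (ih _)

theorem ProperPolicy.pathSum_unique (hπ : ProperPolicy n π) (hs : F BV.s = 0)
    (hF : ∀ v, IsBVertex n v → v ≠ BV.s → F v = r v (π v) + F (π v)) (hv : IsBVertex n v) :
    F v = pathSum r π v := by
  induction v, hv using hπ.path_induction with
  | sink => rw [hs, pathSum_sink]
  | step v hv hvs ih => rw [hF v hv hvs, ih, hπ.pathSum_eq hv hvs]

theorem ProperPolicy.le_of_reaches (hπ : ProperPolicy n π)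
    (hF : ∀ y, IsBVertex n y → y ≠ BV.s → F y ≤ F (π y)) (hu : IsBVertex n u)
    (h : Reaches π u x) : F u ≤ F x := by
  have key : IsBVertex n u → F u ≤ F x := by
    refine Reaches.head_induction h (fun _ => le_rfl) fun y _ ih hy => ?_
    by_cases hs : y = BV.s
    · simpa only [hs, hπ.apply_s] using ih (hπ.isBVertex_apply hy)
    · exact (hF y hy hs).trans (ih (hπ.isBVertex_apply hy))
  exact key hu

theorem ProperPolicy.pathSum_sub_le (hπ : ProperPolicy n π)
    (hr : ∀ u v, BEdge n u v → u ≠ BV.s → r u v ≤ g u - g v) (hu : IsBVertex n u)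
    (h : Reaches π u x) : pathSum r π u - pathSum r π x ≤ g u - g x := by
  have hmono := hπ.le_of_reaches (F := fun y => pathSum r π y - g y) (fun y hy hs => by
    have := hr y (π y) (hπ.isBPolicy y hy) hs
    simp only [hπ.pathSum_eq hy hs]; linarith) hu h
  linarith

theorem ProperPolicy.BVal_sub_le (hπ : ProperPolicy n π) (hu : IsBVertex n u)
    (h : Reaches π u x) : BVal n π u - BVal n π x ≤ potential n u - potential n x :=
  hπ.pathSum_sub_le (fun _ _ e _ => rB_le_potential_sub e) hu h

theorem ProperPolicy.BVal_sub_le_strictPotential (hπ : ProperPolicy n π) (hu : IsBVertex n u)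
    (h : Reaches π u x) : BVal n π u - BVal n π x ≤ strictPotential n u - strictPotential n x :=
  hπ.pathSum_sub_le (fun _ _ e hs => (rB_lt_strictPotential_sub e hs).le) hu h

theorem ProperPolicy.counterVal_sub_le (hπ : ProperPolicy n π) (hu : IsBVertex n u)
    (h : Reaches π u x) : counterVal n π u - counterVal n π x ≤ potential n u - potential n x :=
  hπ.pathSum_sub_le
    (fun _ _ e _ => (counterReward_le_rB e).trans (rB_le_potential_sub e)) hu h

theorem ProperPolicy.le_counterVal_sub (hπ : ProperPolicy n π) (hu : IsBVertex n u)
    (h : Reaches π u x) :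
    2 * (BVal n π u - BVal n π x) - (potential n u - potential n x) ≤
      counterVal n π u - counterVal n π x := by
  have hmono := hπ.le_of_reaches
    (F := fun y => 2 * pathSum (rB n) π y - counterVal n π y - potential n y) (fun y hy hs => by
      have := two_mul_rB_sub_counterReward_le (hπ.isBPolicy y hy)
      simp only [hπ.pathSum_eq hy hs]; linarith) hu h
  simp only [BVal_eq_pathSum] at *; linarith

theorem ProperPolicy.not_reaches_of_zB_pos (hπ : ProperPolicy n π) (e : BEdge n v w)
    (hz : 0 < zB n π v w) : ¬ Reaches π w v := fun h => by
  have := hπ.BVal_sub_le (isBVertex_target e) h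
  have := rB_le_potential_sub e
  unfold zB at hz; linarith

end Proper

/-! ## Switching an edge -/

section Update

variable {n : ℕ} {r : BV → BV → ℚ} {π : BV → BV} {u v w : BV}

theorem iterate_update_of_not_reaches (h : ¬ Reaches π u v) (k : ℕ) :
    (Function.update π v w)^[k] u = π^[k] u := by
  induction k with
  | zero => rfl
  | succ k ih =>
    rw [Function.iterate_succ_apply', Function.iterate_succ_apply', ih,
      Function.update_of_ne fun hk => h ⟨k, hk⟩]

open Classical in
theorem pathSum_update_of_not_reaches (h : ¬ Reaches π u v) :
    pathSum r (Function.update π v w) u = pathSum r π u :=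
  congrArg (fun p : ℕ → BV => if hp : ∃ k, p k = BV.s then
      ∑ i ∈ Finset.range (Nat.find hp), r (p i) (p (i + 1)) else 0)
    (funext (iterate_update_of_not_reaches h))

theorem ne_s_of_not_reaches (e : BEdge n v w) (hw : ¬ Reaches π w v) : v ≠ BV.s := by
  rintro rfl
  exact hw (bEdge_s.1 e ▸ Reaches.refl π BV.s)

theorem ProperPolicy.update (hπ : ProperPolicy n π) (e : BEdge n v w)
    (hw : ¬ Reaches π w v) : ProperPolicy n (Function.update π v w) where
  isBPolicy u hu := by
    by_cases huv : u = v
    · rwa [huv, Function.update_self]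
    · rw [Function.update_of_ne huv]; exact hπ.isBPolicy u hu
  unichain u hu := by
    obtain ⟨l, hl⟩ := hπ.unichain w (isBVertex_target e)
    change Reaches _ _ _
    induction u, hu using hπ.path_induction with
    | sink => exact Reaches.refl _ _
    | step u _ _ ih =>
      refine Reaches.head ?_
      by_cases huv : u = v
      · rw [huv, Function.update_self]
        exact ⟨l, by rw [iterate_update_of_not_reaches hw, hl]⟩
      · rwa [Function.update_of_ne huv]

theorem ProperPolicy.pathSum_update_self (hπ : ProperPolicy n π) (e : BEdge n v w)
    (hw : ¬ Reaches π w v) :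
    pathSum r (Function.update π v w) v = r v w + pathSum r π w := by
  rw [(hπ.update e hw).pathSum_eq (isBVertex_source e) (ne_s_of_not_reaches e hw),
    Function.update_self, pathSum_update_of_not_reaches hw]

theorem ProperPolicy.pathSum_update_sub (hπ : ProperPolicy n π) (e : BEdge n v w)
    (hw : ¬ Reaches π w v) (hu : IsBVertex n u) (h : Reaches π u v) :
    pathSum r (Function.update π v w) u - pathSum r π u =
      pathSum r (Function.update π v w) v - pathSum r π v := by
  induction u, hu using hπ.path_induction with
  | sink => exact absurd h (hπ.not_reaches_of_s (ne_s_of_not_reaches e hw))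
  | step u hu hus ih =>
    by_cases huv : u = v
    · rw [huv]
    · obtain ⟨_ | k, hk⟩ := h
      · exact absurd hk huv
      · rw [← ih ⟨k, hk⟩, (hπ.update e hw).pathSum_eq hu hus, hπ.pathSum_eq hu hus,
          Function.update_of_ne huv]
        ring

theorem ProperPolicy.BVal_update_self (hπ : ProperPolicy n π) (e : BEdge n v w)
    (hw : ¬ Reaches π w v) :
    BVal n (Function.update π v w) v = rB n v w + BVal n π w :=
  hπ.pathSum_update_self e hw

theorem ProperPolicy.BVal_update_of_reaches (hπ : ProperPolicy n π) (e : BEdge n v w)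
    (hw : ¬ Reaches π w v) (hu : IsBVertex n u) (h : Reaches π u v) :
    BVal n (Function.update π v w) u = BVal n π u + zB n π v w := by
  have hsub := hπ.pathSum_update_sub (r := rB n) e hw hu h
  rw [hπ.pathSum_update_self e hw] at hsub
  simp only [BVal_eq_pathSum, zB] at *
  linarith

theorem BVal_update_of_not_reaches (h : ¬ Reaches π u v) :
    BVal n (Function.update π v w) u = BVal n π u :=
  pathSum_update_of_not_reaches h

end Update

/-! ## Admissible policies -/

/-- The proper policies with nonnegative values, a class closed under improving switches. -/
structure AdmissiblePolicy (n : ℕ) (π : BV → BV) : Prop extends ProperPolicy n π where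
  nonneg : ∀ v, IsBVertex n v → 0 ≤ BVal n π v

section Admissible

variable {n : ℕ} {π : BV → BV} {u v w : BV}

theorem AdmissiblePolicy.not_reaches (hπ : AdmissiblePolicy n π) (e : BEdge n v w)
    (hz : 0 < zB n π v w) : ¬ Reaches π w v :=
  hπ.toProperPolicy.not_reaches_of_zB_pos e hz

theorem AdmissiblePolicy.BVal_le_update (hπ : AdmissiblePolicy n π) (e : BEdge n v w)
    (hz : 0 < zB n π v w) (hu : IsBVertex n u) :
    BVal n π u ≤ BVal n (Function.update π v w) u := by
  by_cases h : Reaches π u v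
  · rw [hπ.BVal_update_of_reaches e (hπ.not_reaches e hz) hu h]; linarith
  · rw [BVal_update_of_not_reaches h]

theorem AdmissiblePolicy.update (hπ : AdmissiblePolicy n π) (e : BEdge n v w)
    (hz : 0 < zB n π v w) : AdmissiblePolicy n (Function.update π v w) where
  toProperPolicy := hπ.toProperPolicy.update e (hπ.not_reaches e hz)
  nonneg u hu := (hπ.nonneg u hu).trans (hπ.BVal_le_update e hz hu)

theorem exists_int_eq_four_mul_rB (n : ℕ) (u v : BV) : ∃ m : ℤ, 4 * rB n u v = m := by
  unfold rB
  split
  · split_ifs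
    · exact ⟨4 * 2 ^ _, by push_cast; rfl⟩
    · exact ⟨0, by simp⟩
  · exact ⟨-4 * 2 ^ _ + 5, by push_cast; ring⟩
  · split_ifs
    · exact ⟨3, by norm_num⟩
    · exact ⟨0, by simp⟩
  · split_ifs
    · exact ⟨3, by norm_num⟩
    · exact ⟨0, by simp⟩
  · exact ⟨0, by simp⟩

theorem ProperPolicy.exists_int_eq_four_mul_BVal (hπ : ProperPolicy n π) (hv : IsBVertex n v) :
    ∃ m : ℤ, 4 * BVal n π v = m := by
  induction v, hv using hπ.path_induction with
  | sink => exact ⟨0, by rw [BVal_eq_pathSum, pathSum_sink]; simp⟩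
  | step v hv hs ih =>
    obtain ⟨m, hm⟩ := ih
    obtain ⟨k, hk⟩ := exists_int_eq_four_mul_rB n v (π v)
    refine ⟨k + m, ?_⟩
    rw [BVal_eq_pathSum, hπ.pathSum_eq hv hs, mul_add, hk, ← BVal_eq_pathSum, hm]
    push_cast; rfl

theorem ProperPolicy.quarter_le_abs_zB (hπ : ProperPolicy n π) (e : BEdge n u v)
    (hz : zB n π u v ≠ 0) : 1 / 4 ≤ |zB n π u v| := by
  obtain ⟨a, ha⟩ := hπ.exists_int_eq_four_mul_BVal (isBVertex_source e)
  obtain ⟨b, hb⟩ := hπ.exists_int_eq_four_mul_BVal (isBVertex_target e)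
  obtain ⟨c, hc⟩ := exists_int_eq_four_mul_rB n u v
  have h4 : zB n π u v = ((c + b - a : ℤ) : ℚ) / 4 := by unfold zB; push_cast; linarith
  have hne : c + b - a ≠ 0 := fun h => hz (by rw [h4, h, Int.cast_zero, zero_div])
  have hone : (1 : ℚ) ≤ |((c + b - a : ℤ) : ℚ)| := by exact_mod_cast Int.one_le_abs hne
  rw [h4, abs_div, abs_of_pos (four_pos : (0 : ℚ) < 4)]
  linarith

theorem neg_two_pow_le_rB (e : BEdge n u v) : -(2 ^ n : ℚ) ≤ rB n u v := by
  have hpos : (0 : ℚ) < 2 ^ n := by positivity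
  unfold rB
  split
  · split_ifs
    · exact (neg_neg_of_pos hpos).le.trans (by positivity)
    · linarith
  · have := pow_le_pow_right₀ (one_le_two (α := ℚ)) (isBVertex_source e).2
    linarith
  · split_ifs <;> linarith
  · split_ifs <;> linarith
  · linarith

theorem potential_nonpos (hv : IsBVertex n v) : potential n v ≤ 0 := by
  cases v with
  | t => rfl
  | a i => linarith [potential_a (n := n) (i := i), two_le_two_pow hv.1]
  | b i => linarith [potential_b (n := n) (i := i), two_le_two_pow (show 1 ≤ i + 1 by omega)]
  | _ =>
    have := two_le_two_pow (show 1 ≤ n + 1 by omega)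
    simp only [potential]; linarith

theorem AdmissiblePolicy.abs_zB_le (hπ : AdmissiblePolicy n π) (e : BEdge n u v) :
    |zB n π u v| ≤ 2 ^ (n + 2) := by
  have hV : ∀ x, IsBVertex n x → BVal n π x ≤ potential n x + 2 ^ (n + 1) := fun x hx => by
    have := hπ.BVal_sub_le hx (hπ.unichain x hx)
    rw [BVal_eq_pathSum n π BV.s, pathSum_sink] at this
    simp only [potential] at *; linarith
  have hu := isBVertex_source e
  have hv := isBVertex_target e
  have := hV u hu
  have := hV v hv
  have := hπ.nonneg u hu
  have := hπ.nonneg v hv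
  have := potential_nonpos hu
  have := rB_le_potential_sub e
  have := neg_two_pow_le_rB e
  have : (0 : ℚ) < 2 ^ n := by positivity
  have hpow1 : (2 : ℚ) ^ (n + 1) = 2 * 2 ^ n := by ring
  have hpow2 : (2 : ℚ) ^ (n + 2) = 4 * 2 ^ n := by ring
  rw [zB, hpow2, abs_le]
  constructor <;> linarith

end Admissible

/-! ## Comparing the two vertices of a level -/

section Levels

variable {n j l : ℕ} {π : BV → BV}

theorem ProperPolicy.apply_t (hπ : ProperPolicy n π) : ∃ l, 1 ≤ l ∧ l ≤ n ∧ π BV.t = BV.a l :=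
  bEdge_t.1 (hπ.isBPolicy BV.t trivial)

theorem ProperPolicy.apply_a (hπ : ProperPolicy n π) (h1 : 1 ≤ j) (hj : j ≤ n) :
    π (BV.a j) = BV.b j ∨ π (BV.a j) = aN n (j + 1) ∨ π (BV.a j) = BV.t :=
  (bEdge_a.1 (hπ.isBPolicy _ ⟨h1, hj⟩)).2

theorem ProperPolicy.apply_b (hπ : ProperPolicy n π) (h1 : 1 ≤ j) (hj : j ≤ n) :
    π (BV.b j) = bN n (j + 1) ∨ π (BV.b j) = aN n (j + 1) :=
  (bEdge_b.1 (hπ.isBPolicy _ ⟨h1, hj⟩)).2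

theorem ProperPolicy.val_eq {v w : BV} (hπ : ProperPolicy n π) (hv : IsBVertex n v)
    (hs : v ≠ BV.s) (h : π v = w) :
    BVal n π v = rB n v w + BVal n π w ∧
      counterVal n π v = counterReward n v w + counterVal n π w := by
  subst h
  exact ⟨hπ.pathSum_eq hv hs, hπ.pathSum_eq hv hs⟩

theorem ProperPolicy.val_of_travel (hπ : ProperPolicy n π) (h : π BV.t = BV.a l) :
    BVal n π BV.t = BVal n π (BV.a l) ∧ counterVal n π BV.t = counterVal n π (BV.a l) := by
  simpa [rB, counterReward] using hπ.val_eq (v := BV.t) trivial (by simp) h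

theorem ProperPolicy.val_of_enter (hπ : ProperPolicy n π) (h1 : 1 ≤ j) (hj : j ≤ n)
    (h : π (BV.a j) = BV.b j) :
    BVal n π (BV.a j) = 2 ^ j + BVal n π (BV.b j) ∧
      counterVal n π (BV.a j) = 2 ^ j + counterVal n π (BV.b j) := by
  simpa only [counterReward, rB_enter] using hπ.val_eq (v := BV.a j) ⟨h1, hj⟩ (by simp) h

theorem ProperPolicy.val_of_skip (hπ : ProperPolicy n π) (h1 : 1 ≤ j) (hj : j ≤ n)
    (h : π (BV.a j) = aN n (j + 1)) :
    BVal n π (BV.a j) = BVal n π (aN n (j + 1)) ∧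
      counterVal n π (BV.a j) = counterVal n π (aN n (j + 1)) := by
  simpa only [counterReward, rB_skip, zero_add] using
    hπ.val_eq (v := BV.a j) ⟨h1, hj⟩ (by simp) h

theorem ProperPolicy.val_of_board (hπ : ProperPolicy n π) (h1 : 1 ≤ j) (hj : j ≤ n)
    (h : π (BV.a j) = BV.t) : BVal n π (BV.a j) = BVal n π BV.t - 2 ^ j + 5 / 4 := by
  have := (hπ.val_eq (v := BV.a j) ⟨h1, hj⟩ (by simp) h).1
  rw [rB_board] at this
  linarith

theorem ProperPolicy.val_of_stay (hπ : ProperPolicy n π) (h1 : 1 ≤ j) (hj : j ≤ n)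
    (h : π (BV.b j) = bN n (j + 1)) :
    BVal n π (BV.b j) = 3 / 4 + BVal n π (bN n (j + 1)) ∧
      counterVal n π (BV.b j) = counterVal n π (bN n (j + 1)) := by
  simpa only [counterReward, rB_stay, zero_add] using
    hπ.val_eq (v := BV.b j) ⟨h1, hj⟩ (by simp) h

theorem ProperPolicy.val_of_leave (hπ : ProperPolicy n π) (h1 : 1 ≤ j) (hj : j ≤ n)
    (h : π (BV.b j) = aN n (j + 1)) :
    BVal n π (BV.b j) = BVal n π (aN n (j + 1)) ∧
      counterVal n π (BV.b j) = counterVal n π (aN n (j + 1)) := by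
  simpa only [counterReward, rB_leave, zero_add] using
    hπ.val_eq (v := BV.b j) ⟨h1, hj⟩ (by simp) h

theorem BVal_s (n : ℕ) (π : BV → BV) : BVal n π BV.s = 0 := pathSum_sink _ _

theorem counterVal_s (n : ℕ) (π : BV → BV) : counterVal n π BV.s = 0 := pathSum_sink _ _

theorem ProperPolicy.val_d (hπ : ProperPolicy n π) :
    BVal n π BV.d = 0 ∧ counterVal n π BV.d = 0 := by
  simpa [rB, counterReward, BVal_s, counterVal_s] using hπ.val_eq (v := BV.d) trivial (by simp)
    (bEdge_d.1 (hπ.isBPolicy BV.d trivial))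

/-- The vertex `a_j` boards, or has a value even smaller than boarding would give. -/
def BoardsOrWorse (n : ℕ) (π : BV → BV) (j : ℕ) : Prop :=
  π (aN n j) = BV.t ∨ BVal n π (aN n j) < BVal n π BV.t - 2 ^ j + 5 / 4

theorem ProperPolicy.le_of_board (hπ : ProperPolicy n π) (hj : j ≤ n + 1)
    (h : π (aN n j) = BV.t) : j ≤ n := by
  by_contra hlt
  obtain rfl : j = n + 1 := by omega
  simp [aN_top, hπ.apply_s] at h

theorem ProperPolicy.le_of_boardsOrWorse (hπ : ProperPolicy n π) (h1 : 1 ≤ j) (hj : j ≤ n + 1)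
    (h : BoardsOrWorse n π j) : BVal n π (aN n j) ≤ BVal n π BV.t - 2 ^ j + 5 / 4 := by
  rcases h with h | h
  · have hjn := hπ.le_of_board hj h
    rw [aN_of_le hjn] at h ⊢
    exact (hπ.val_of_board h1 hjn h).le
  · exact h.le

theorem ProperPolicy.level_trichotomy (hπ : ProperPolicy n π) (h1 : 1 ≤ j) (hj : j ≤ n + 1) :
    (BVal n π (aN n j) ≤ BVal n π (bN n j) ∧
        counterVal n π (aN n j) = counterVal n π (bN n j)) ∨
      (2 ^ j + BVal n π (bN n j) ≤ BVal n π (aN n j) ∧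
        2 ^ j + counterVal n π (bN n j) ≤ counterVal n π (aN n j)) ∨
      BoardsOrWorse n π j := by
  induction hj using Nat.decreasingInduction with
  | self =>
    rw [aN_top, bN_top, hπ.val_d.1, hπ.val_d.2, BVal_s, counterVal_s]
    exact Or.inl ⟨le_rfl, rfl⟩
  | of_succ j hj ih =>
    have hjn : j ≤ n := by omega
    have hpow := two_le_two_pow h1
    have hsucc : (2 : ℚ) ^ (j + 1) = 2 * 2 ^ j := by ring
    rw [BoardsOrWorse, aN_of_le hjn, bN_of_le hjn]
    rcases hπ.apply_a h1 hjn with ha | ha | ha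
    · obtain ⟨hV, hC⟩ := hπ.val_of_enter h1 hjn ha
      exact Or.inr (Or.inl ⟨hV.ge, hC.ge⟩)
    · obtain ⟨hV, hC⟩ := hπ.val_of_skip h1 hjn ha
      rcases hπ.apply_b h1 hjn with hb | hb
      · obtain ⟨hV', hC'⟩ := hπ.val_of_stay h1 hjn hb
        rcases ih (by omega) with h | h | h
        · exact Or.inl ⟨by linarith [h.1], by linarith [h.2]⟩
        · exact Or.inr (Or.inl ⟨by linarith [h.1], by linarith [h.2]⟩)
        · have := hπ.le_of_boardsOrWorse (by omega) (by omega) h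
          exact Or.inr (Or.inr (Or.inr (by linarith)))
      · obtain ⟨hV', hC'⟩ := hπ.val_of_leave h1 hjn hb
        exact Or.inl ⟨by linarith, by linarith⟩
    · exact Or.inr (Or.inr (Or.inl ha))

/-- No level below a boarding `a_{i+1}` leads directly into it, neither by skipping nor by entering
and leaving. -/
def NoDirectBoarding (n : ℕ) (π : BV → BV) : Prop :=
  ∀ i, 1 ≤ i → i < n → π (BV.a (i + 1)) = BV.t →
    π (BV.a i) ≠ BV.a (i + 1) ∧ ¬ (π (BV.a i) = BV.b i ∧ π (BV.b i) = BV.a (i + 1))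

/-- The edge of `t` is not improvable. -/
def TravelOptimal (n : ℕ) (π : BV → BV) : Prop :=
  ∀ i, 1 ≤ i → i ≤ n → BVal n π (BV.a i) ≤ BVal n π BV.t

theorem AdmissiblePolicy.aN_le_of_travelOptimal (hπ : AdmissiblePolicy n π)
    (ht : TravelOptimal n π) (h1 : 1 ≤ j) (hj : j ≤ n + 1) :
    BVal n π (aN n j) ≤ BVal n π BV.t := by
  unfold aN; split_ifs
  · rw [BVal_s]; exact hπ.nonneg BV.t trivial
  · exact ht j h1 (by omega)

/-- The possible positions of `a_j` relative to `t`: equally good with the same counter value,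
behind by at least `2 ^ j` in the counter value, or no better than boarding. -/
def ATrails (n : ℕ) (π : BV → BV) (j : ℕ) : Prop :=
  (BVal n π (aN n j) = BVal n π BV.t ∧ counterVal n π (aN n j) = counterVal n π BV.t) ∨
    counterVal n π (aN n j) ≤ counterVal n π BV.t - 2 ^ j ∨ BoardsOrWorse n π j

/-- The analogue of `ATrails` for `b_j`, with `c` the gap in the counter value. -/
def BTrails (n : ℕ) (π : BV → BV) (j : ℕ) (c : ℚ) : Prop :=
  (BVal n π BV.t ≤ BVal n π (bN n j) ∧ counterVal n π (bN n j) = counterVal n π BV.t) ∨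
    counterVal n π (bN n j) ≤ counterVal n π BV.t - c ∨
    (π (bN n j) = aN n (j + 1) ∧ π (aN n (j + 1)) = BV.t) ∨
    BVal n π (bN n j) < BVal n π BV.t - 2 ^ (j + 1) + 5 / 4

theorem BTrails.mono {c c' : ℚ} (h : BTrails n π j c) (hc : c' ≤ c) : BTrails n π j c' :=
  h.imp_right (Or.imp_left fun h => by linarith)

theorem ProperPolicy.aTrails_and_bTrails_of_travel (hπ : ProperPolicy n π) (h1 : 1 ≤ l)
    (hl : l ≤ n) (htl : π BV.t = BV.a l) : ATrails n π l ∧ BTrails n π l (2 ^ l) := by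
  obtain ⟨hV, hC⟩ := hπ.val_of_travel htl
  have hpow := two_le_two_pow h1
  rw [← aN_of_le hl] at hV hC
  refine ⟨Or.inl ⟨hV.symm, hC.symm⟩, ?_⟩
  rcases hπ.level_trichotomy h1 (by omega) with h | h | h
  · exact Or.inl ⟨by linarith, by linarith⟩
  · exact Or.inr (Or.inl (by linarith))
  · have := hπ.le_of_boardsOrWorse h1 (by omega) h
    linarith

theorem ProperPolicy.bTrails_of_succ (hπ : ProperPolicy n π) (h1 : 1 ≤ j) (hj : j < n)
    (ha : ATrails n π (j + 1)) (hb : BTrails n π (j + 1) (2 ^ (j + 1))) :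
    BTrails n π j (2 ^ (j + 1)) := by
  have hpow := two_le_two_pow h1
  have hsucc : (2 : ℚ) ^ (j + 1) = 2 * 2 ^ j := by ring
  have hsucc' : (2 : ℚ) ^ (j + 1 + 1) = 4 * 2 ^ j := by ring
  rw [BTrails, bN_of_le hj.le]
  rcases hπ.apply_b h1 hj.le with h | h
  · obtain ⟨hV, hC⟩ := hπ.val_of_stay h1 hj.le h
    rcases hb with hb | hb | hb | hb
    · exact Or.inl ⟨by linarith, by linarith⟩
    · exact Or.inr (Or.inl (by linarith))
    · obtain ⟨hleave, hboard⟩ := hb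
      rw [bN_of_le hj] at hleave hV
      have := (hπ.val_of_leave (by omega) hj hleave).1
      have := hπ.le_of_boardsOrWorse (by omega) (by omega) (Or.inl hboard)
      exact Or.inr (Or.inr (Or.inr (by linarith)))
    · exact Or.inr (Or.inr (Or.inr (by linarith)))
  · obtain ⟨hV, hC⟩ := hπ.val_of_leave h1 hj.le h
    rcases ha with ha | ha | ha | ha
    · exact Or.inl ⟨by linarith, by linarith⟩
    · exact Or.inr (Or.inl (by linarith))
    · exact Or.inr (Or.inr (Or.inl ⟨h, ha⟩))
    · exact Or.inr (Or.inr (Or.inr (by linarith)))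

theorem ProperPolicy.aTrails_of_succ (hπ : ProperPolicy n π) (hd : NoDirectBoarding n π)
    (ht : TravelOptimal n π) (h1 : 1 ≤ j) (hj : j < n) (ha : ATrails n π (j + 1))
    (hb : BTrails n π j (2 ^ (j + 1))) : ATrails n π j := by
  have hpow := two_le_two_pow h1
  have hsucc : (2 : ℚ) ^ (j + 1) = 2 * 2 ^ j := by ring
  have hT := ht j h1 hj.le
  have hd := hd j h1 hj
  rw [ATrails, BoardsOrWorse, aN_of_le hj.le]
  rw [BTrails, aN_of_le hj, bN_of_le hj.le] at hb
  rw [ATrails, BoardsOrWorse, aN_of_le hj] at ha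
  rcases hπ.apply_a h1 hj.le with h | h | h
  · obtain ⟨hV, hC⟩ := hπ.val_of_enter h1 hj.le h
    rcases hb with hb | hb | hb | hb
    · linarith
    · exact Or.inr (Or.inl (by linarith))
    · exact absurd ⟨h, hb.1⟩ (hd hb.2).2
    · exact Or.inr (Or.inr (Or.inr (by linarith)))
  · obtain ⟨hV, hC⟩ := hπ.val_of_skip h1 hj.le h
    rw [aN_of_le hj] at hV hC h
    rcases ha with ha | ha | ha | ha
    · exact Or.inl ⟨by linarith, by linarith⟩
    · exact Or.inr (Or.inl (by linarith))
    · exact absurd h (hd ha).1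
    · exact Or.inr (Or.inr (Or.inr (by linarith)))
  · exact Or.inr (Or.inr (Or.inl h))

theorem ProperPolicy.aTrails_and_bTrails (hπ : ProperPolicy n π) (hd : NoDirectBoarding n π)
    (ht : TravelOptimal n π) (hl : l ≤ n) (htl : π BV.t = BV.a l) (h1 : 1 ≤ j) (hj : j ≤ l) :
    ATrails n π j ∧ BTrails n π j (2 ^ j) := by
  induction hj using Nat.decreasingInduction with
  | self => exact hπ.aTrails_and_bTrails_of_travel h1 hl htl
  | of_succ j hj ih =>
    obtain ⟨ha, hb⟩ := ih (by omega)
    have hb := hπ.bTrails_of_succ h1 (by omega) ha hb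
    exact ⟨hπ.aTrails_of_succ hd ht h1 (by omega) ha hb,
      hb.mono (pow_le_pow_right₀ (by norm_num) (Nat.le_succ j))⟩

theorem ProperPolicy.bTrails_of_lt_travel (hπ : ProperPolicy n π) (hd : NoDirectBoarding n π)
    (ht : TravelOptimal n π) (hl : l ≤ n) (htl : π BV.t = BV.a l) (h1 : 1 ≤ j) (hj : j < l) :
    BTrails n π j (2 ^ (j + 1)) := by
  obtain ⟨ha, hb⟩ := hπ.aTrails_and_bTrails hd ht hl htl (j := j + 1) (by omega) hj
  exact hπ.bTrails_of_succ h1 (by omega) ha hb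

end Levels

/-! ## The lowest improvable vertex -/

section Lowest

variable {n i j l : ℕ} {π : BV → BV} {u v x y : BV}

theorem ProperPolicy.NV_le_of_reaches (hπ : ProperPolicy n π) (hu : IsBVertex n u)
    (h : Reaches π u x) (ht : ¬ Reaches π BV.t x) : NV n u ≤ NV n x := by
  have key : IsBVertex n u → NV n u ≤ NV n x := by
    refine Reaches.head_induction h (fun _ => le_rfl) fun y hy ih hyV => ?_
    have ih := ih (hπ.isBVertex_apply hyV)
    by_cases hs : y = BV.s
    · rwa [hs, hπ.apply_s, ← hs] at ih
    · obtain ⟨_ | k, hk⟩ := hy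
      · exact hk ▸ le_rfl
      · exact (NV_lt_NV_of_bEdge (hπ.isBPolicy y hyV) hs fun h => ht ⟨k, h ▸ hk⟩).le.trans ih
  exact key hu

theorem ProperPolicy.apply_ne_t_of_reaches (hπ : ProperPolicy n π) (h : Reaches π BV.t x) :
    π x ≠ BV.t := fun hx => by
  have hxV := hπ.isBVertex_of_reaches (u := BV.t) trivial h
  obtain ⟨i, rfl⟩ := source_of_bEdge_t (hx ▸ hπ.isBPolicy x hxV)
  have := hπ.BVal_sub_le (u := BV.t) trivial h
  have := hπ.val_of_board hxV.1 hxV.2 hx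
  rw [potential_t, potential_a] at *
  linarith

theorem ProperPolicy.reaches_level (hπ : ProperPolicy n π) (htl : π BV.t = BV.a l) (h1 : 1 ≤ l)
    (hl : l ≤ i) (hi : i ≤ n) : Reaches π BV.t (BV.a i) ∨ Reaches π BV.t (BV.b i) := by
  induction i, hl using Nat.le_induction with
  | base => exact Or.inl ⟨1, htl⟩
  | succ i hl ih =>
    have hb : Reaches π BV.t (BV.b i) →
        Reaches π BV.t (BV.a (i + 1)) ∨ Reaches π BV.t (BV.b (i + 1)) := fun h => by
      rw [← aN_of_le hi, ← bN_of_le hi]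
      rcases hπ.apply_b (h1.trans hl) (by omega) with h' | h' <;> rw [← h']
      exacts [Or.inr h.tail, Or.inl h.tail]
    rcases ih (by omega) with h | h
    · rcases hπ.apply_a (h1.trans hl) (by omega) with h' | h' | h'
      · exact hb (h' ▸ h.tail)
      · rw [aN_of_le hi] at h'; exact Or.inl (h' ▸ h.tail)
      · exact absurd h' (hπ.apply_ne_t_of_reaches h)
    · exact hb h

/-- No edge leaving a vertex of smaller number than `v` is improving. -/
def OptimalBelow (n : ℕ) (π : BV → BV) (v : BV) : Prop :=
  ∀ x y, BEdge n x y → NV n x < NV n v → zB n π x y ≤ 0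

theorem OptimalBelow.BVal_le (ho : OptimalBelow n π v) (e : BEdge n x y) (hx : NV n x < NV n v) :
    rB n x y + BVal n π y ≤ BVal n π x := by
  linarith [show rB n x y + BVal n π y - BVal n π x ≤ 0 from ho x y e hx]

theorem OptimalBelow.travelOptimal (ho : OptimalBelow n π v) (hv : 1 < NV n v) :
    TravelOptimal n π := fun j h1 hj => by
  simpa [rB] using ho.BVal_le (bEdge_t.2 ⟨j, h1, hj, rfl⟩) hv

theorem OptimalBelow.enter_le (ho : OptimalBelow n π v) (h1 : 1 ≤ j) (hj : j ≤ n)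
    (hv : 2 * j < NV n v) : 2 ^ j + BVal n π (BV.b j) ≤ BVal n π (BV.a j) := by
  simpa only [rB_enter] using ho.BVal_le (bEdge_a.2 ⟨⟨h1, hj⟩, Or.inl rfl⟩) hv

theorem OptimalBelow.board_le (ho : OptimalBelow n π v) (h1 : 1 ≤ j) (hj : j ≤ n)
    (hv : 2 * j < NV n v) : BVal n π BV.t - 2 ^ j + 5 / 4 ≤ BVal n π (BV.a j) := by
  have := ho.BVal_le (bEdge_a.2 ⟨⟨h1, hj⟩, Or.inr (Or.inr rfl)⟩) hv
  rw [rB_board] at this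
  linarith

theorem OptimalBelow.stay_le (ho : OptimalBelow n π v) (h1 : 1 ≤ j) (hj : j ≤ n)
    (hv : 2 * j + 1 < NV n v) : 3 / 4 + BVal n π (bN n (j + 1)) ≤ BVal n π (BV.b j) := by
  simpa only [rB_stay] using ho.BVal_le (bEdge_b.2 ⟨⟨h1, hj⟩, Or.inl rfl⟩) hv

theorem OptimalBelow.leave_le (ho : OptimalBelow n π v) (h1 : 1 ≤ j) (hj : j ≤ n)
    (hv : 2 * j + 1 < NV n v) : BVal n π (aN n (j + 1)) ≤ BVal n π (BV.b j) := by
  simpa only [rB_leave, zero_add] using ho.BVal_le (bEdge_b.2 ⟨⟨h1, hj⟩, Or.inr rfl⟩) hv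

theorem OptimalBelow.BVal_a_le (ho : OptimalBelow n π v) (hv : 1 < NV n v) (h1 : 1 ≤ i)
    (hi : i ≤ n) (hiv : 2 * i ≤ NV n v) : 2 ^ i - 2 + BVal n π (BV.a i) ≤ BVal n π BV.t := by
  induction i, h1 using Nat.le_induction with
  | base => linarith [ho.travelOptimal hv 1 le_rfl hi]
  | succ i h1 ih =>
    have := ih (by omega) (by omega)
    have := ho.enter_le h1 (by omega) (by omega)
    have := ho.leave_le h1 (by omega) (by omega)
    rw [aN_of_le hi] at this
    rw [pow_succ]
    linarith

theorem OptimalBelow.BVal_b_le (ho : OptimalBelow n π v) (h1 : 1 ≤ i) (hi : i ≤ n)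
    (hiv : 2 * i < NV n v) : 2 ^ (i + 1) - 2 + BVal n π (BV.b i) ≤ BVal n π BV.t := by
  have := ho.BVal_a_le (by omega) h1 hi hiv.le
  have := ho.enter_le h1 hi hiv
  rw [pow_succ]
  linarith

theorem OptimalBelow.le_BVal_of_reaches (ho : OptimalBelow n π v) (hπ : ProperPolicy n π)
    (h1 : 1 ≤ j) (hj : j ≤ n) (hv : 2 * j < NV n v) (h : Reaches π (BV.a j) x) :
    BVal n π BV.t + potential n x - 3 / 4 ≤ BVal n π x := by
  have := ho.board_le h1 hj hv
  have := hπ.BVal_sub_le (u := BV.a j) ⟨h1, hj⟩ h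
  rw [potential_a] at this
  linarith

theorem OptimalBelow.eq_of_reaches_board (ho : OptimalBelow n π v) (hπ : ProperPolicy n π)
    (hd : NoDirectBoarding n π) (h1 : 1 ≤ j) (hj : j ≤ n) (hv : 2 * j < NV n v)
    (h : Reaches π (BV.a j) (BV.a i)) (hb : π (BV.a i) = BV.t) : j = i := by
  by_contra hne
  have hi := hπ.isBVertex_of_reaches (u := BV.a j) ⟨h1, hj⟩ h
  have hV := hπ.val_of_board hi.1 hi.2 hb
  obtain ⟨y, hy, hyi⟩ := h.exists_pred (by simpa using hne)
  have hyV := hπ.isBVertex_of_reaches (u := BV.a j) ⟨h1, hj⟩ hy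
  have hlow := ho.le_BVal_of_reaches hπ h1 hj hv hy
  rcases source_of_bEdge_a (hyi ▸ hπ.isBPolicy y hyV) with rfl | ⟨m, hm, rfl, rfl | rfl⟩
  · exact hπ.apply_ne_t_of_reaches ⟨1, hyi⟩ hb
  · exact (hd m hm hi.2 hb).1 hyi
  · -- The vertex before `b_m` cannot be `b_{m-1}`, since staying loses too much potential.
    obtain ⟨y, hy', hyb⟩ := hy.exists_pred (by simp)
    have hyV' := hπ.isBVertex_of_reaches (u := BV.a j) ⟨h1, hj⟩ hy'
    rcases source_of_bEdge_b (hyb ▸ hπ.isBPolicy y hyV') with rfl | ⟨k, hk, rfl, rfl⟩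
    · exact (hd m hm hi.2 hb).2 ⟨hyb, hyi⟩
    · have hleave := (hπ.val_of_leave hm hyV.2 (by rw [aN_of_le hi.2]; exact hyi)).1
      have hstay := (hπ.val_of_stay hk hyV'.2 (by rw [bN_of_le hyV.2]; exact hyb)).1
      rw [aN_of_le hi.2] at hleave
      rw [bN_of_le hyV.2] at hstay
      have := ho.le_BVal_of_reaches hπ h1 hj hv hy'
      rw [potential_b] at this
      have := two_le_two_pow hk
      rw [pow_succ, pow_succ] at *
      linarith

end Lowest

section LowestSwitch

variable {n i j l : ℕ} {π : BV → BV} {u v w : BV}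

/-- The edge `(v, w)` is an improving switch of largest reduced costs at the vertex of smallest
number that has an improving switch. -/
structure LowestSwitch (n : ℕ) (π : BV → BV) (v w : BV) : Prop extends AdmissiblePolicy n π where
  noDirectBoarding : NoDirectBoarding n π
  optimalBelow : OptimalBelow n π v
  edge : BEdge n v w
  pos : 0 < zB n π v w
  max : ∀ w', BEdge n v w' → zB n π v w' ≤ zB n π v w

theorem LowestSwitch.BVal_lt (hs : LowestSwitch n π v w) :
    BVal n π v < rB n v w + BVal n π w := by
  have := hs.pos
  unfold zB at this
  linarith

theorem LowestSwitch.not_reaches (hs : LowestSwitch n π v w) : ¬ Reaches π w v :=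
  hs.toAdmissiblePolicy.not_reaches hs.edge hs.pos

theorem LowestSwitch.apply_ne (hs : LowestSwitch n π v w) : π v ≠ w := by
  rintro rfl
  have := hs.pathSum_eq (r := rB n) (isBVertex_source hs.edge)
    (ne_s_of_not_reaches hs.edge hs.not_reaches)
  exact hs.BVal_lt.ne this

theorem LowestSwitch.exists_of_ne_t (hs : LowestSwitch n π v w) (hv : v ≠ BV.t) :
    ∃ i, 1 ≤ i ∧ i ≤ n ∧ (v = BV.a i ∨ v = BV.b i) := by
  have hV := isBVertex_source hs.edge
  have hlt := hs.BVal_lt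
  have e := hs.edge
  cases v with
  | t => exact absurd rfl hv
  | a i => exact ⟨i, hV.1, hV.2, Or.inl rfl⟩
  | b i => exact ⟨i, hV.1, hV.2, Or.inr rfl⟩
  | d => rw [bEdge_d.1 e, hs.val_d.1, BVal_s] at hlt; simp [rB] at hlt
  | s => rw [bEdge_s.1 e] at hlt; simp [rB] at hlt

theorem LowestSwitch.travelOptimal (hs : LowestSwitch n π v w) (hv : v ≠ BV.t) :
    TravelOptimal n π := by
  obtain ⟨i, h1, -, rfl | rfl⟩ := hs.exists_of_ne_t hv <;>
    exact hs.optimalBelow.travelOptimal (by simp only [NV]; omega)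

theorem LowestSwitch.aN_le (hs : LowestSwitch n π v w) (hv : v ≠ BV.t) (h1 : 1 ≤ j)
    (hj : j ≤ n + 1) : BVal n π (aN n j) ≤ BVal n π BV.t :=
  hs.aN_le_of_travelOptimal (hs.travelOptimal hv) h1 hj

theorem LowestSwitch.counterVal_eq_of_b (hs : LowestSwitch n π (BV.b i) w)
    (hlow : BVal n π BV.t + potential n (BV.b i) - 3 / 4 ≤ BVal n π (BV.b i))
    (hb : π (BV.b i) = aN n (i + 1) → π (aN n (i + 1)) ≠ BV.t) :
    w = bN n (i + 1) ∧ π (BV.b i) = aN n (i + 1) ∧ counterVal n π w = counterVal n π (BV.b i) := by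
  obtain ⟨⟨h1, hi⟩, hw⟩ := bEdge_b.1 hs.edge
  have hlt := hs.BVal_lt
  have hA := hs.aN_le (by simp) (j := i + 1) (by omega) (by omega)
  have hpow := two_le_two_pow h1
  have htri := hs.level_trichotomy (j := i + 1) (by omega) (by omega)
  have hboard := hs.le_of_boardsOrWorse (j := i + 1) (by omega) (by omega)
  rw [potential_b] at hlow
  rw [pow_succ] at *
  rcases hw with rfl | rfl <;> rcases hs.apply_b h1 hi with h | h
  · exact absurd h hs.apply_ne
  · obtain ⟨hV, hC⟩ := hs.val_of_leave h1 hi h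
    rw [rB_stay] at hlt
    rcases htri with htri | htri | htri | htri
    · exact ⟨rfl, h, by linarith⟩
    · linarith
    · exact absurd htri (hb h)
    · rw [pow_succ] at htri; linarith
  · have hV := (hs.val_of_stay h1 hi h).1
    rw [rB_leave] at hlt
    rcases htri with htri | htri | htri
    · linarith
    · linarith
    · linarith [hboard htri]
  · exact absurd h hs.apply_ne

theorem LowestSwitch.BVal_b_le (hs : LowestSwitch n π (BV.a i) w) (h2 : 2 ≤ i) :
    2 ^ i - 5 / 4 + BVal n π (BV.b i) ≤ BVal n π BV.t := by
  obtain ⟨m, rfl⟩ : ∃ m, i = m + 1 := ⟨i - 1, by omega⟩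
  obtain ⟨-, hi⟩ := isBVertex_source hs.edge
  have := hs.optimalBelow.BVal_b_le (i := m) (by omega) (by omega) (by simp only [NV]; omega)
  have := hs.optimalBelow.stay_le (j := m) (by omega) (by omega) (by simp only [NV]; omega)
  rw [bN_of_le hi] at this
  linarith

theorem LowestSwitch.counterVal_le_of_a_of_tight (hs : LowestSwitch n π (BV.a i) w)
    (hV : BVal n π (BV.a i) = BVal n π BV.t + potential n (BV.a i)) :
    counterReward n (BV.a i) w + counterVal n π w ≤ counterVal n π (BV.a i) + 2 := by
  obtain ⟨⟨h1, hi⟩, hw⟩ := bEdge_a.1 hs.edge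
  have hlt := hs.BVal_lt
  have hA := hs.aN_le (by simp) (j := i + 1) (by omega) (by omega)
  have hpow := two_le_two_pow h1
  rw [potential_a] at hV
  rcases hw with rfl | rfl | rfl
  · rw [rB_enter] at hlt
    have htri := hs.level_trichotomy h1 (by omega)
    rw [BoardsOrWorse, aN_of_le hi, bN_of_le hi] at htri
    rcases htri with htri | htri | htri | htri
    · rcases h1.eq_or_lt with rfl | h2
      · simp only [counterReward, rB_enter]; linarith
      · linarith [hs.BVal_b_le h2]
    · linarith
    · linarith [hs.val_of_board h1 hi htri]
    · linarith
  · rw [rB_skip] at hlt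
    have hsucc : (2 : ℚ) ^ (i + 1) = 2 * 2 ^ i := by ring
    rcases hs.apply_a h1 hi with h | h | h
    · have hE := (hs.val_of_enter h1 hi h).1
      rcases hs.apply_b h1 hi with hb | hb
      · have hB := (hs.val_of_stay h1 hi hb).1
        rcases hs.level_trichotomy (j := i + 1) (by omega) (by omega) with htri | htri | htri
        · linarith
        · linarith
        · linarith [hs.le_of_boardsOrWorse (by omega) (by omega) htri]
      · linarith [(hs.val_of_leave h1 hi hb).1]
    · exact absurd h hs.apply_ne
    · linarith [hs.val_of_board h1 hi h]
  · rw [rB_board] at hlt; linarith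

theorem LowestSwitch.BVal_eq_of_reaches (hs : LowestSwitch n π v w) (hv : v ≠ BV.t)
    (h : Reaches π BV.t v) : BVal n π v = BVal n π BV.t + potential n v := by
  have hle := hs.BVal_sub_le (u := BV.t) trivial h
  rw [potential_t] at hle
  obtain ⟨i, h1, hi, rfl | rfl⟩ := hs.exists_of_ne_t hv
  · have := hs.optimalBelow.BVal_a_le (by simp only [NV]; omega) h1 hi le_rfl
    rw [potential_a] at *
    linarith
  · have := hs.optimalBelow.BVal_b_le h1 hi (by simp only [NV]; omega)
    rw [potential_b] at *
    linarith

theorem LowestSwitch.counterVal_le_of_reaches (hs : LowestSwitch n π v w) (hv : v ≠ BV.t)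
    (h : Reaches π BV.t v) :
    counterReward n v w + counterVal n π w ≤ counterVal n π v + 2 := by
  have hV := hs.BVal_eq_of_reaches hv h
  obtain ⟨i, -, -, rfl | rfl⟩ := hs.exists_of_ne_t hv
  · exact hs.counterVal_le_of_a_of_tight hV
  · have := (hs.counterVal_eq_of_b (by linarith) fun hb =>
      hs.apply_ne_t_of_reaches (hb ▸ h.tail)).2.2
    simp only [counterReward]; linarith

/-! ## Switches off the path of `t` -/

theorem LowestSwitch.exists_stay_of_reaches_b (hs : LowestSwitch n π (BV.a i) w)
    (ht : ¬ Reaches π BV.t (BV.a i)) (h : Reaches π BV.t (BV.b i)) :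
    ∃ m, 1 ≤ m ∧ i = m + 1 ∧ Reaches π BV.t (BV.b m) ∧ π (BV.a m) = BV.b m ∧
      π (BV.b m) = BV.b i ∧ BVal n π BV.t = 2 ^ i - 2 + BVal n π (BV.b m) := by
  obtain ⟨h1, hi⟩ := (bEdge_a.1 hs.edge).1
  obtain ⟨y, hy, hyi⟩ := h.exists_pred (by simp)
  have hyV := hs.isBVertex_of_reaches (u := BV.t) trivial hy
  rcases source_of_bEdge_b (hyi ▸ hs.isBPolicy y hyV) with rfl | ⟨m, hm, rfl, rfl⟩
  · exact absurd hy ht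
  have hle := hs.BVal_sub_le (u := BV.t) trivial hy
  have hge := hs.optimalBelow.BVal_b_le hm hyV.2 (by simp only [NV]; omega)
  rw [potential_t, potential_b] at hle
  refine ⟨m, hm, rfl, hy, ?_, hyi, by linarith⟩
  obtain ⟨y, hy', hym⟩ := hy.exists_pred (by simp)
  have hyV' := hs.isBVertex_of_reaches (u := BV.t) trivial hy'
  rcases source_of_bEdge_b (hym ▸ hs.isBPolicy y hyV') with rfl | ⟨k, hk, rfl, rfl⟩
  · exact hym
  · have hle' := hs.BVal_sub_le (u := BV.t) trivial hy'
    have hstay := (hs.val_of_stay hk hyV'.2 (by rw [bN_of_le hyV.2]; exact hym)).1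
    have := two_le_two_pow (show 1 ≤ k + 1 by omega)
    rw [bN_of_le hyV.2] at hstay
    rw [potential_t, potential_b] at hle'
    rw [pow_succ _ (k + 1)] at hge
    linarith

theorem LowestSwitch.index_le (hs : LowestSwitch n π (BV.a i) w)
    (ht : ¬ Reaches π BV.t (BV.a i)) (h1 : 1 ≤ j) (hj : j ≤ n)
    (h : Reaches π (BV.a j) (BV.a i)) : j ≤ i := by
  have := hs.NV_le_of_reaches (u := BV.a j) ⟨h1, hj⟩ h ht
  simp only [NV] at this
  omega

theorem LowestSwitch.eq_of_bypass (hs : LowestSwitch n π (BV.a (j + 1)) w)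
    (ht : ¬ Reaches π BV.t (BV.a (j + 1))) (ha : π (BV.a j) = BV.b j)
    (hb : π (BV.b j) = BV.b (j + 1)) (hu : IsBVertex n u) (h : Reaches π u (BV.a (j + 1))) :
    u = BV.a (j + 1) := by
  by_contra hne
  obtain ⟨y, hy, hyi⟩ := h.exists_pred hne
  rcases source_of_bEdge_a (hyi ▸ hs.isBPolicy y (hs.isBVertex_of_reaches hu hy)) with
    rfl | ⟨k, -, hkj, rfl | rfl⟩
  · exact ht ⟨1, hyi⟩
  · obtain rfl : j = k := by omega
    simp [ha] at hyi
  · obtain rfl : j = k := by omega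
    simp [hb] at hyi

theorem LowestSwitch.counterVal_le_of_enter (hs : LowestSwitch n π (BV.a i) (BV.b i))
    (ht : ¬ Reaches π BV.t (BV.a i)) (h1 : 1 ≤ j) (hj : j ≤ n) (h : Reaches π (BV.a j) (BV.a i))
    (hU : BVal n π BV.t < 2 ^ i + BVal n π (BV.b i) + (2 ^ i - 2 ^ j)) :
    2 ^ i + counterVal n π (BV.b i) + (2 ^ i - 2 ^ j) ≤ counterVal n π BV.t + 2 := by
  have hi := isBVertex_source hs.edge
  have hji := hs.index_le ht h1 hj h
  have hpow := two_le_two_pow h1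
  obtain ⟨l, hl1, hl, htl⟩ := hs.apply_t
  rcases le_or_gt l i with hli | hil
  · obtain ⟨m, hm, rfl, hbm, ham, hbm', hT⟩ :=
      hs.exists_stay_of_reaches_b ht ((hs.reaches_level htl hl1 hli hi.2).resolve_left ht)
    obtain rfl : j = m + 1 := by simpa using hs.eq_of_bypass ht ham hbm' (u := BV.a j) ⟨h1, hj⟩ h
    have hC := hs.le_counterVal_sub (u := BV.t) trivial hbm
    rw [← bN_of_le hj] at hbm' ⊢
    have := (hs.val_of_stay hm (by omega) hbm').2
    rw [potential_t, potential_b] at hC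
    linarith
  · rcases hs.bTrails_of_lt_travel hs.noDirectBoarding (hs.travelOptimal (by simp)) hl htl
      hi.1 hil with hb | hb | hb | hb
    · rw [bN_of_le hi.2] at hb
      rcases hi.1.eq_or_lt with rfl | h2
      · obtain rfl : j = 1 := by omega
        linarith
      · have := hs.BVal_b_le h2
        have := two_le_two_pow hi.1
        linarith
    · rw [bN_of_le hi.2, pow_succ] at hb
      linarith
    · rw [bN_of_le hi.2] at hb
      have := (hs.val_of_leave hi.1 hi.2 hb.1).1
      have := hs.le_of_boardsOrWorse (by omega) (by omega) (Or.inl hb.2)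
      rw [pow_succ] at this
      linarith
    · rw [bN_of_le hi.2, pow_succ] at hb
      linarith

theorem LowestSwitch.lt_travel_of_skip (hs : LowestSwitch n π (BV.a i) (aN n (i + 1)))
    (ht : ¬ Reaches π BV.t (BV.a i)) (htl : π BV.t = BV.a l)
    (hU : BVal n π BV.t + 2 - 2 ^ i < BVal n π (aN n (i + 1))) : i < l := by
  have hi := isBVertex_source hs.edge
  have hin : i ≤ n := hi.2
  have hpow := two_le_two_pow hi.1
  by_contra! hli
  have hl := hs.isBVertex_apply (u := BV.t) trivial
  rw [htl] at hl
  obtain ⟨m, hm, rfl, -, -, hbm', hT⟩ :=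
    hs.exists_stay_of_reaches_b ht ((hs.reaches_level htl hl.1 hli hi.2).resolve_left ht)
  rw [← bN_of_le hi.2] at hbm'
  have hstay := (hs.val_of_stay hm (by omega) hbm').1
  rw [bN_of_le hi.2] at hstay
  have hA := hs.aN_le (by simp) (j := m + 1 + 1) (by omega) (by omega)
  have hsucc : (2 : ℚ) ^ (m + 1 + 1) = 2 * 2 ^ (m + 1) := by ring
  rcases hs.apply_b hi.1 hi.2 with h | h
  · have := (hs.val_of_stay hi.1 hi.2 h).1
    rcases hs.level_trichotomy (j := m + 1 + 1) (by omega) (by omega) with htri | htri | htri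
    · linarith
    · linarith
    · linarith [hs.le_of_boardsOrWorse (by omega) (by omega) htri]
  · linarith [(hs.val_of_leave hi.1 hi.2 h).1]

theorem LowestSwitch.eq_of_skip_of_BVal_eq (hs : LowestSwitch n π (BV.a i) (aN n (i + 1)))
    (h1 : 1 ≤ j) (hj : j ≤ n) (hji : j ≤ i) (h : Reaches π (BV.a j) (BV.a i))
    (hA : BVal n π (aN n (i + 1)) = BVal n π BV.t) : j = i := by
  by_contra hne
  have hi := isBVertex_source hs.edge
  have hin : i ≤ n := hi.2
  have hpow := two_le_two_pow hi.1
  have hsucc : (2 : ℚ) ^ (i + 1) = 2 * 2 ^ i := by ring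
  have hlt := hs.BVal_lt
  have hjv : 2 * j < NV n (BV.a i) := by simp only [NV]; omega
  have hlow := hs.optimalBelow.le_BVal_of_reaches hs.toProperPolicy h1 hj hjv h
  rw [rB_skip] at hlt
  rw [potential_a] at hlow
  rcases hs.apply_a hi.1 hi.2 with ha | ha | ha
  · have hE := (hs.val_of_enter hi.1 hi.2 ha).1
    rcases hs.apply_b hi.1 hi.2 with hb | hb
    · have hB := (hs.val_of_stay hi.1 hi.2 hb).1
      rcases hs.level_trichotomy (j := i + 1) (by omega) (by omega) with htri | htri | htri
      · linarith
      · linarith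
      · linarith [hs.le_of_boardsOrWorse (by omega) (by omega) htri]
    · linarith [(hs.val_of_leave hi.1 hi.2 hb).1]
  · exact hs.apply_ne ha
  · exact hne
      (hs.optimalBelow.eq_of_reaches_board hs.toProperPolicy hs.noDirectBoarding h1 hj hjv h ha)

theorem LowestSwitch.counterVal_le_of_skip (hs : LowestSwitch n π (BV.a i) (aN n (i + 1)))
    (ht : ¬ Reaches π BV.t (BV.a i)) (h1 : 1 ≤ j) (hj : j ≤ n) (h : Reaches π (BV.a j) (BV.a i))
    (hU : BVal n π BV.t < BVal n π (aN n (i + 1)) + (2 ^ i - 2 ^ j)) :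
    counterVal n π (aN n (i + 1)) + (2 ^ i - 2 ^ j) ≤ counterVal n π BV.t + 2 := by
  have hi := isBVertex_source hs.edge
  have hji := hs.index_le ht h1 hj h
  have hpow := two_le_two_pow h1
  have hpow' := two_le_two_pow hi.1
  have hsucc : (2 : ℚ) ^ (i + 1) = 2 * 2 ^ i := by ring
  obtain ⟨l, -, hl, htl⟩ := hs.apply_t
  have hil := hs.lt_travel_of_skip ht htl (by linarith)
  rcases (hs.aTrails_and_bTrails hs.noDirectBoarding (hs.travelOptimal (by simp)) hl htl
    (j := i + 1) (by omega) hil).1 with ha | ha | ha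
  · obtain rfl := hs.eq_of_skip_of_BVal_eq h1 hj hji h ha.1
    linarith
  · linarith
  · linarith [hs.le_of_boardsOrWorse (by omega) (by omega) ha]

theorem LowestSwitch.counterVal_le_of_b (hs : LowestSwitch n π (BV.b i) w)
    (ht : ¬ Reaches π BV.t (BV.b i)) (h1 : 1 ≤ j) (hj : j ≤ n)
    (h : Reaches π (BV.a j) (BV.b i)) :
    counterVal n π w + (2 ^ (i + 1) - 2 ^ j) ≤ counterVal n π BV.t + 2 := by
  have hi := isBVertex_source hs.edge
  have hNV := hs.NV_le_of_reaches (u := BV.a j) ⟨h1, hj⟩ h ht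
  simp only [NV] at hNV
  have hpow := two_le_two_pow h1
  have hpow' := two_le_two_pow hi.1
  have hsucc : (2 : ℚ) ^ (i + 1) = 2 * 2 ^ i := by ring
  have hjv : 2 * j < NV n (BV.b i) := by simp only [NV]; omega
  have hlow := hs.optimalBelow.le_BVal_of_reaches hs.toProperPolicy h1 hj hjv h
  have hF := hs.optimalBelow.BVal_b_le hi.1 hi.2 (by simp only [NV]; omega)
  have hboard : π (BV.b i) = aN n (i + 1) → π (aN n (i + 1)) ≠ BV.t := fun hb hbt => by
    have hin := hs.le_of_board (Nat.succ_le_succ hi.2) hbt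
    rw [aN_of_le hin] at hb hbt
    have := hs.optimalBelow.eq_of_reaches_board hs.toProperPolicy hs.noDirectBoarding h1 hj hjv
      (hb ▸ h.tail) hbt
    omega
  obtain ⟨-, hleave, hC⟩ := hs.counterVal_eq_of_b hlow hboard
  have hV := hs.val_of_leave hi.1 hi.2 hleave
  rw [potential_b] at hlow
  obtain ⟨l, hl1, hl, htl⟩ := hs.apply_t
  rcases le_or_gt l i with hli | hil
  · have ha := (hs.reaches_level htl hl1 hli hi.2).resolve_right ht
    have hT := hs.BVal_sub_le (u := BV.t) trivial ha
    rw [potential_t, potential_a] at hT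
    rcases hs.apply_a hi.1 hi.2 with h' | h' | h'
    · exact absurd (h' ▸ ha.tail) ht
    · linarith [(hs.val_of_skip hi.1 hi.2 h').1]
    · exact absurd h' (hs.apply_ne_t_of_reaches ha)
  · rcases (hs.aTrails_and_bTrails hs.noDirectBoarding (hs.travelOptimal (by simp)) hl htl
      (j := i + 1) (by omega) hil).1 with ha | ha | ha | ha
    · linarith
    · linarith
    · exact absurd ha (hboard hleave)
    · linarith

theorem LowestSwitch.counterVal_le_of_not_reaches (hs : LowestSwitch n π v w) (hv : v ≠ BV.t)
    (ht : ¬ Reaches π BV.t v) (h1 : 1 ≤ j) (hj : j ≤ n) (h : Reaches π (BV.a j) v)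
    (hU : BVal n π BV.t <
      rB n v w + BVal n π w + (potential n (BV.a j) - potential n v)) :
    counterReward n v w + counterVal n π w + (potential n (BV.a j) - potential n v) ≤
      counterVal n π BV.t + 2 := by
  have hpow := two_le_two_pow h1
  obtain ⟨i, -, -, rfl | rfl⟩ := hs.exists_of_ne_t hv <;> simp only [potential] at hU ⊢
  · obtain ⟨-, rfl | rfl | rfl⟩ := bEdge_a.1 hs.edge <;> simp only [counterReward]
    · rw [rB_enter] at hU ⊢
      linarith [hs.counterVal_le_of_enter ht h1 hj h (by linarith)]
    · rw [rB_skip] at hU ⊢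
      linarith [hs.counterVal_le_of_skip ht h1 hj h (by linarith)]
    · rw [rB_board] at hU
      linarith
  · simp only [counterReward]
    linarith [hs.counterVal_le_of_b ht h1 hj h]

theorem LowestSwitch.counterVal_travel_update_le (hs : LowestSwitch n π v w) (hv : v ≠ BV.t) :
    counterVal n (Function.update π v w) BV.t ≤ counterVal n π BV.t + 2 := by
  by_cases ht : Reaches π BV.t v
  · have := hs.counterVal_le_of_reaches hv ht
    have hsub := hs.pathSum_update_sub (r := counterReward n) (u := BV.t) hs.edge hs.not_reaches
      trivial ht
    rw [hs.pathSum_update_self hs.edge hs.not_reaches] at hsub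
    linarith
  · linarith [pathSum_update_of_not_reaches (r := counterReward n) (w := w) ht]

theorem LowestSwitch.counterVal_update_le (hs : LowestSwitch n π v w) (hv : v ≠ BV.t)
    (h1 : 1 ≤ j) (hj : j ≤ n)
    (hlt : BVal n (Function.update π v w) BV.t < BVal n (Function.update π v w) (BV.a j)) :
    counterVal n (Function.update π v w) (BV.a j) ≤ counterVal n π BV.t + 2 := by
  have haV : IsBVertex n (BV.a j) := ⟨h1, hj⟩
  have hT := hs.travelOptimal hv j h1 hj
  have hmono := hs.BVal_le_update hs.edge hs.pos (u := BV.t) trivial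
  have ha : Reaches π (BV.a j) v := by
    by_contra ha
    rw [BVal_update_of_not_reaches ha] at hlt
    linarith
  have hV := hs.BVal_update_of_reaches hs.edge hs.not_reaches haV ha
  by_cases ht : Reaches π BV.t v
  · rw [hV, hs.BVal_update_of_reaches (u := BV.t) hs.edge hs.not_reaches trivial ht] at hlt
    linarith
  · rw [hV, BVal_update_of_not_reaches ht, zB] at hlt
    have hC := hs.pathSum_update_sub (r := counterReward n) hs.edge hs.not_reaches haV ha
    rw [hs.pathSum_update_self hs.edge hs.not_reaches] at hC
    have := hs.counterVal_sub_le haV ha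
    have := hs.counterVal_le_of_not_reaches hv ht h1 hj ha
      (by linarith [hs.BVal_sub_le haV ha])
    linarith

/-! ## Updating an admissible policy at the lowest improvable vertex -/

theorem LowestSwitch.not_reaches_of_board (hs : LowestSwitch n π (BV.a (i + 1)) BV.t)
    (h1 : 1 ≤ i) : ¬ Reaches π (BV.a i) (BV.a (i + 1)) := fun hr => by
  obtain ⟨-, hi⟩ := isBVertex_source hs.edge
  have hlow := hs.optimalBelow.le_BVal_of_reaches hs.toProperPolicy h1 (by omega)
    (by simp only [NV]; omega) hr
  have hlt := hs.BVal_lt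
  rw [rB_board] at hlt
  rw [potential_a] at hlow
  linarith

theorem LowestSwitch.apply_a_succ_ne_t (hs : LowestSwitch n π (BV.a i) (BV.a (i + 1)))
    (hi : i < n) : π (BV.a (i + 1)) ≠ BV.t := fun hb => by
  have hiV := isBVertex_source hs.edge
  have hmax := hs.max BV.t (bEdge_a.2 ⟨hiV, Or.inr (Or.inr rfl)⟩)
  rw [← aN_of_le hi, zB, zB, rB_board, rB_skip, aN_of_le hi,
    hs.val_of_board (by omega) hi hb] at hmax
  have := two_le_two_pow hiV.1
  rw [pow_succ] at hmax
  linarith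

theorem LowestSwitch.not_board_of_enter (hs : LowestSwitch n π (BV.a i) (BV.b i)) (hi : i < n)
    (hleave : π (BV.b i) = BV.a (i + 1)) : π (BV.a (i + 1)) ≠ BV.t := fun hb => by
  have hiV := isBVertex_source hs.edge
  have hlt := hs.BVal_lt
  have hB := (hs.val_of_leave hiV.1 hi.le (by rw [hleave, aN_of_le hi])).1
  rw [aN_of_le hi, hs.val_of_board (by omega) hi hb] at hB
  rcases hs.apply_a hiV.1 hi.le with h | h | h
  · exact hs.apply_ne h
  · exact (hs.noDirectBoarding i hiV.1 hi hb).1 (by rw [h, aN_of_le hi])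
  · rw [rB_enter, hs.val_of_board hiV.1 hi.le h, hB, pow_succ] at hlt
    linarith

theorem LowestSwitch.not_board_of_leave (hs : LowestSwitch n π (BV.b i) (BV.a (i + 1)))
    (hi : i < n) (henter : π (BV.a i) = BV.b i) : π (BV.a (i + 1)) ≠ BV.t := fun hb => by
  have hiV := isBVertex_source hs.edge
  have hlt := hs.BVal_lt
  have hlow := hs.optimalBelow.board_le hiV.1 hi.le (by simp only [NV]; omega)
  rw [← aN_of_le hi, rB_leave, aN_of_le hi, hs.val_of_board (by omega) hi hb, pow_succ] at hlt
  linarith [(hs.val_of_enter hiV.1 hi.le henter).1]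

theorem LowestSwitch.noDirectBoarding_update (hs : LowestSwitch n π v w) :
    NoDirectBoarding n (Function.update π v w) := by
  intro i h1 hi hb
  have hd := hs.noDirectBoarding i h1 hi
  by_cases hv : v = BV.a (i + 1)
  · subst hv
    obtain rfl : w = BV.t := by simpa using hb
    have hr := hs.not_reaches_of_board h1
    simp only [Function.update_of_ne (show BV.a i ≠ BV.a (i + 1) by simp),
      Function.update_of_ne (show BV.b i ≠ BV.a (i + 1) by simp)]
    exact ⟨fun h => hr ⟨1, h⟩, fun h => hr ⟨2, by simp [h]⟩⟩
  · rw [Function.update_of_ne (Ne.symm hv)] at hb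
    by_cases hva : v = BV.a i
    · subst hva
      simp only [Function.update_self, Function.update_of_ne (show BV.b i ≠ BV.a i by simp)]
      exact ⟨fun h => (h ▸ hs).apply_a_succ_ne_t hi hb,
        fun h => (h.1 ▸ hs).not_board_of_enter hi h.2 hb⟩
    · rw [Function.update_of_ne (Ne.symm hva)]
      refine ⟨(hd hb).1, fun h => ?_⟩
      by_cases hvb : v = BV.b i
      · subst hvb
        obtain rfl : w = BV.a (i + 1) := by simpa using h.2
        exact hs.not_board_of_leave hi h.1 hb
      · rw [Function.update_of_ne (Ne.symm hvb)] at h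
        exact (hd hb).2 h

theorem LowestSwitch.travelOptimal_update (hs : LowestSwitch n π BV.t w) :
    TravelOptimal n (Function.update π BV.t w) := fun j h1 hj => by
  have haV : IsBVertex n (BV.a j) := ⟨h1, hj⟩
  by_cases ha : Reaches π (BV.a j) BV.t
  · have hsub := hs.pathSum_update_sub (r := rB n) hs.edge hs.not_reaches haV ha
    have := hs.BVal_sub_le haV ha
    have := two_le_two_pow h1
    rw [potential_a, potential_t] at *
    simp only [BVal_eq_pathSum] at *
    linarith
  · have hmax := hs.max (BV.a j) (bEdge_t.2 ⟨j, h1, hj, rfl⟩)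
    rw [BVal_update_of_not_reaches ha, hs.BVal_update_self hs.edge hs.not_reaches]
    simp only [zB, show rB n BV.t (BV.a j) = 0 from rfl] at hmax
    linarith

theorem OptimalBelow.two_pow_le_counterVal (ho : OptimalBelow n π BV.s) (hπ : ProperPolicy n π)
    (hn : 1 ≤ n) : 2 ^ (n + 1) - 2 ≤ counterVal n π BV.t := by
  have hb := ho.BVal_b_le hn le_rfl (by simp only [NV]; omega)
  have hstay := ho.stay_le hn le_rfl (by simp only [NV]; omega)
  have hC := hπ.le_counterVal_sub (u := BV.t) trivial (hπ.unichain BV.t trivial)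
  rw [bN_top, hπ.val_d.1] at hstay
  rw [BVal_s, counterVal_s] at hC
  simp only [potential] at hC
  linarith

end LowestSwitch

/-! ## Values of policies for `𝔇_n` -/

open Classical in
/-- The policy for `𝔇_n` which follows the policy `π` at the vertices of `𝔅_n`, and in which
`S` is the set of edges of `𝔅_n` whose gadgets are switched on, i.e. lead to `y`. -/
noncomputable def gadgetPolicy (π : BV → BV) (S : Set (BV × BV)) : DV → DV
  | DV.base v => if v = BV.s then DV.base BV.s else DV.x v (π v)
  | DV.x v w => if (v, w) ∈ S then DV.y v w else DV.base v
  | DV.y v w => DV.y v w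
  | DV.z _ w => DV.base w

open Classical in
/-- The value function of a gadget policy in terms of its values `V` at the vertices of `𝔅_n`. -/
noncomputable def gadgetVal (n : ℕ) (p : BV → ℚ) (S : Set (BV × BV)) (V : BV → ℚ) : DV → ℚ
  | DV.base v => if IsBVertex n v then V v else 0
  | DV.x v w => if DEdgePair n v w then
      V v + (if (v, w) ∈ S then p v * (rB n v w + V w - V v) else 0) else 0
  | DV.y v w => if DEdgePair n v w then V v + p v * (rB n v w + V w - V v) else 0
  | DV.z v w => if DEdgePair n v w then rB n v w + V w else 0

/-- An admissible policy `π` together with a set `S` of switched-on gadgets that contains the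
gadgets of all active edges. -/
structure GadgetState (n : ℕ) (π : BV → BV) (S : Set (BV × BV)) : Prop
    extends AdmissiblePolicy n π where
  active_mem : ∀ v, IsBVertex n v → v ≠ BV.s → (v, π v) ∈ S

theorem twin_eq_gadgetPolicy (π : BV → BV) : twin π = gadgetPolicy π {e | e.2 = π e.1} := by
  funext u
  cases u <;> simp [twin, gadgetPolicy]

section Values

variable {n : ℕ} {p V V' : BV → ℚ} {π : BV → BV} {S : Set (BV × BV)} {v : BV}

theorem gadgetVal_mono (hp0 : ∀ v, 0 < p v) (hp1 : ∀ v, p v ≤ 1)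
    (h : ∀ v, IsBVertex n v → V v ≤ V' v) (u : DV) :
    gadgetVal n p S V u ≤ gadgetVal n p S V' u := by
  have hy : ∀ v w, DEdgePair n v w →
      V v + p v * (rB n v w + V w - V v) ≤ V' v + p v * (rB n v w + V' w - V' v) := by
    intro v w e
    have hv := mul_le_mul_of_nonneg_left (h v (isBVertex_source e.1)) (sub_nonneg.2 (hp1 v))
    have hw := mul_le_mul_of_nonneg_left (h w (isBVertex_target e.1)) (hp0 v).le
    linarith
  cases u with
  | base v => simp only [gadgetVal]; split_ifs with hv; exacts [h v hv, le_rfl]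
  | x v w =>
    simp only [gadgetVal]
    split_ifs with e
    · exact hy v w e
    · simpa using h v (isBVertex_source e.1)
    · exact le_rfl
  | y v w => simp only [gadgetVal]; split_ifs with e; exacts [hy v w e, le_rfl]
  | z v w =>
    simp only [gadgetVal]
    split_ifs with e
    exacts [add_le_add_right (h w (isBVertex_target e.1)) _, le_rfl]

theorem ProperPolicy.zB_apply (hπ : ProperPolicy n π) (hv : IsBVertex n v) :
    zB n π v (π v) = 0 := by
  by_cases hs : v = BV.s
  · subst hs; simp [hπ.apply_s, zB, rB]
  · rw [zB, BVal_eq_pathSum n π v, hπ.pathSum_eq hv hs, BVal_eq_pathSum]; ring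

theorem GadgetState.isDVal_gadgetVal (hg : GadgetState n π S) :
    IsDVal n p (gadgetPolicy π S) (gadgetVal n p S (BVal n π)) := by
  refine ⟨by simp [gadgetVal, BVal_s], fun u hu => ?_, fun v w e => ?_⟩
  · cases u with
    | base v =>
      by_cases hs : v = BV.s
      · subst hs; simp [gadgetPolicy, rD]
      · have hv : IsBVertex n v := hu
        have e : DEdgePair n v (π v) := ⟨hg.isBPolicy v hv, hs⟩
        simp [gadgetPolicy, rD, gadgetVal, hv, hs, e, hg.active_mem v hv hs,
          show rB n v (π v) + BVal n π (π v) - BVal n π v = 0 from hg.zB_apply hv]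
    | x v w =>
      have e : DEdgePair n v w := hu
      by_cases h : (v, w) ∈ S <;>
        simp [gadgetPolicy, rD, gadgetVal, e, h, isBVertex_source e.1]
    | y v w => exact hu.elim
    | z v w =>
      have e : DEdgePair n v w := hu
      simp [gadgetPolicy, rD, gadgetVal, e, isBVertex_target e.1]
  · simp only [gadgetVal, e, if_true, isBVertex_source e.1]
    ring

theorem eq_gadgetVal_of_isDVal {W : DV → ℚ} (hp : ∀ v, 0 < p v) (hg : GadgetState n π S)
    (hW : IsDVal n p (gadgetPolicy π S) W) (h0 : ∀ u, ¬ IsDVertex n u → W u = 0) :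
    W = gadgetVal n p S (BVal n π) := by
  obtain ⟨hsink, hagent, hrand⟩ := hW
  have hz : ∀ v w, DEdgePair n v w → W (DV.z v w) = rB n v w + W (DV.base w) := fun v w e => by
    simpa [gadgetPolicy, rD] using hagent (DV.z v w) e
  have hbase : ∀ v, IsBVertex n v → W (DV.base v) = BVal n π v := fun v hv => by
    refine hg.pathSum_unique (F := fun v => W (DV.base v)) hsink (fun v hv hs => ?_) hv
    have e : DEdgePair n v (π v) := ⟨hg.isBPolicy v hv, hs⟩
    have hx := hagent (DV.base v) hv
    have hy := hagent (DV.x v (π v)) e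
    have hr := hrand v (π v) e
    simp only [gadgetPolicy, if_neg hs, rD, if_pos (hg.active_mem v hv hs)] at hx hy
    refine mul_left_cancel₀ (hp v).ne' ?_
    rw [hz v _ e] at hr
    linarith
  funext u
  by_cases hu : IsDVertex n u
  · cases u with
    | base v => simp [gadgetVal, hbase v hu, show IsBVertex n v from hu]
    | y v w =>
      have e : DEdgePair n v w := hu
      rw [hrand v w e, hz v w e, hbase v (isBVertex_source e.1), hbase w (isBVertex_target e.1)]
      simp only [gadgetVal, e, if_true]; ring
    | z v w =>
      have e : DEdgePair n v w := hu
      rw [hz v w e, hbase w (isBVertex_target e.1)]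
      simp only [gadgetVal, e, if_true]
    | x v w =>
      have e : DEdgePair n v w := hu
      have hx := hagent (DV.x v w) e
      have hr := hrand v w e
      rw [hz v w e, hbase v (isBVertex_source e.1), hbase w (isBVertex_target e.1)] at hr
      by_cases h : (v, w) ∈ S
      · simp only [gadgetPolicy, h, if_true, rD] at hx
        simp only [gadgetVal, e, h, if_true]
        linarith
      · simp only [gadgetPolicy, h, if_false, rD, hbase v (isBVertex_source e.1)] at hx
        simp only [gadgetVal, e, h, if_true, if_false]
        linarith
  · rw [h0 u hu]
    cases u <;> exact (if_neg hu).symm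

theorem GadgetState.DVal_eq (hg : GadgetState n π S) (hp : ∀ v, 0 < p v) :
    DVal n p (gadgetPolicy π S) = gadgetVal n p S (BVal n π) := by
  have hval : IsDVal n p (gadgetPolicy π S) (gadgetVal n p S (BVal n π)) ∧
      ∀ u, ¬ IsDVertex n u → gadgetVal n p S (BVal n π) u = 0 :=
    ⟨hg.isDVal_gadgetVal, fun u hu => by cases u <;> exact if_neg hu⟩
  have hex : ∃! W, IsDVal n p (gadgetPolicy π S) W ∧ ∀ u, ¬ IsDVertex n u → W u = 0 :=
    ⟨_, hval, fun _ hW => eq_gadgetVal_of_isDVal hp hg hW.1 hW.2⟩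
  rw [DVal, dif_pos hex]
  have hspec := hex.exists.choose_spec
  exact eq_gadgetVal_of_isDVal hp hg hspec.1 hspec.2

end Values

/-! ## Improving switches of gadget policies -/

/-- The gadget of `(v,w)` is switched off although `(v,w)` is improving, or switched on although
`(v,w)` has negative reduced costs. These are the gadgets with an improving switch at `x`. -/
def Flippable (n : ℕ) (π : BV → BV) (S : Set (BV × BV)) (v w : BV) : Prop :=
  BEdge n v w ∧ ((v, w) ∉ S ∧ 0 < zB n π v w ∨ (v, w) ∈ S ∧ zB n π v w < 0)

open Classical in
/-- The out-neighbor of `x` in the gadget of `(v,w)` that is not active when `S` is the set of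
switched-on gadgets. -/
noncomputable def flipTarget (S : Set (BV × BV)) (v w : BV) : DV :=
  if (v, w) ∈ S then DV.base v else DV.y v w

section Switches

variable {n : ℕ} {p : BV → ℚ} {π : BV → BV} {S : Set (BV × BV)} {v w : BV} {u u' : DV}

theorem Flippable.zB_ne_zero (h : Flippable n π S v w) : zB n π v w ≠ 0 :=
  h.2.elim (fun h => h.2.ne') (fun h => h.2.ne)

theorem Flippable.dEdgePair (h : Flippable n π S v w) : DEdgePair n v w := by
  refine ⟨h.1, ?_⟩
  rintro rfl
  exact h.zB_ne_zero (by simp [bEdge_s.1 h.1, zB, rB])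

theorem mem_symmDiff_singleton_of_ne {α : Type*} {A : Set α} {x y : α} (h : x ≠ y) :
    x ∈ symmDiff A {y} ↔ x ∈ A := by
  simp [Set.mem_symmDiff, h]

theorem update_gadgetPolicy_x (π : BV → BV) (S : Set (BV × BV)) (v w : BV) :
    Function.update (gadgetPolicy π S) (DV.x v w) (flipTarget S v w) =
      gadgetPolicy π (symmDiff S {(v, w)}) := by
  funext u
  by_cases hu : u = DV.x v w
  · subst hu
    by_cases h : (v, w) ∈ S <;> simp [gadgetPolicy, flipTarget, Set.mem_symmDiff, h]
  · rw [Function.update_of_ne hu]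
    cases u with
    | x a b =>
      have hne : (a, b) ≠ (v, w) := by rintro ⟨⟩; exact hu rfl
      have hmem := mem_symmDiff_singleton_of_ne (A := S) hne
      by_cases hS : (a, b) ∈ S
      · simp only [gadgetPolicy, hmem.2 hS, hS, if_true]
      · simp only [gadgetPolicy, mt hmem.1 hS, hS, if_false]
    | _ => rfl

theorem update_gadgetPolicy_base (π : BV → BV) (S : Set (BV × BV)) (hv : v ≠ BV.s) (w : BV) :
    Function.update (gadgetPolicy π S) (DV.base v) (DV.x v w) =
      gadgetPolicy (Function.update π v w) S := by
  funext u
  by_cases hu : u = DV.base v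
  · subst hu; simp [gadgetPolicy, hv]
  · rw [Function.update_of_ne hu]
    cases u with
    | base a =>
      have hne : a ≠ v := by rintro rfl; exact hu rfl
      simp [gadgetPolicy, hne]
    | _ => rfl

open Classical in
theorem GadgetState.zD_base (hg : GadgetState n π S) (hp : ∀ v, 0 < p v) (e : DEdgePair n v w) :
    zD n p (gadgetPolicy π S) (DV.base v) (DV.x v w) =
      if (v, w) ∈ S then p v * zB n π v w else 0 := by
  simp only [zD, rD, hg.DVal_eq hp, gadgetVal, e, isBVertex_source e.1, if_true, zB]
  ring

open Classical in
theorem GadgetState.zD_x_base (hg : GadgetState n π S) (hp : ∀ v, 0 < p v)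
    (e : DEdgePair n v w) :
    zD n p (gadgetPolicy π S) (DV.x v w) (DV.base v) =
      if (v, w) ∈ S then p v * -zB n π v w else 0 := by
  simp only [zD, rD, hg.DVal_eq hp, gadgetVal, e, isBVertex_source e.1, if_true, zB]
  split_ifs <;> ring

open Classical in
theorem GadgetState.zD_x_y (hg : GadgetState n π S) (hp : ∀ v, 0 < p v) (e : DEdgePair n v w) :
    zD n p (gadgetPolicy π S) (DV.x v w) (DV.y v w) =
      if (v, w) ∈ S then 0 else p v * zB n π v w := by
  simp only [zD, rD, hg.DVal_eq hp, gadgetVal, e, if_true, zB]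
  split_ifs <;> ring

theorem GadgetState.zD_z (hg : GadgetState n π S) (hp : ∀ v, 0 < p v) (e : DEdgePair n v w) :
    zD n p (gadgetPolicy π S) (DV.z v w) (DV.base w) = 0 := by
  simp only [zD, rD, hg.DVal_eq hp, gadgetVal, e, isBVertex_target e.1, if_true]
  ring

theorem Flippable.dImproving (h : Flippable n π S v w) (hg : GadgetState n π S)
    (hp : ∀ v, 0 < p v) :
    DImproving n p (gadgetPolicy π S) (DV.x v w) (flipTarget S v w) := by
  have e := h.dEdgePair
  rcases h.2 with ⟨hS, hz⟩ | ⟨hS, hz⟩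
  · rw [flipTarget, if_neg hS]
    refine ⟨Or.inl ⟨v, w, e, by simp⟩, ?_⟩
    rw [hg.zD_x_y hp e, if_neg hS]
    exact mul_pos (hp v) hz
  · rw [flipTarget, if_pos hS]
    refine ⟨Or.inl ⟨v, w, e, by simp⟩, ?_⟩
    rw [hg.zD_x_base hp e, if_pos hS]
    exact mul_pos (hp v) (neg_pos.2 hz)

theorem GadgetState.dImproving_base (hg : GadgetState n π S) (hp : ∀ v, 0 < p v)
    (e : DEdgePair n v w) (hS : (v, w) ∈ S) (hz : 0 < zB n π v w) :
    DImproving n p (gadgetPolicy π S) (DV.base v) (DV.x v w) := by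
  refine ⟨Or.inl ⟨v, w, e, by simp⟩, ?_⟩
  rw [hg.zD_base hp e, if_pos hS]
  exact mul_pos (hp v) hz

theorem GadgetState.dImproving_cases (hg : GadgetState n π S) (hp : ∀ v, 0 < p v)
    (h : DImproving n p (gadgetPolicy π S) u u') :
    (∃ v w, Flippable n π S v w ∧ u = DV.x v w ∧ u' = flipTarget S v w) ∨
      ∃ v w, DEdgePair n v w ∧ (v, w) ∈ S ∧ 0 < zB n π v w ∧ u = DV.base v ∧ u' = DV.x v w := by
  obtain ⟨he, hz⟩ := h
  rcases he with ⟨v, w, e, ⟨rfl, rfl⟩ | ⟨rfl, rfl⟩ | ⟨rfl, rfl⟩ | ⟨rfl, rfl⟩⟩ | ⟨rfl, rfl⟩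
  · rw [hg.zD_base hp e] at hz
    by_cases hS : (v, w) ∈ S
    · rw [if_pos hS, mul_pos_iff_of_pos_left (hp v)] at hz
      exact Or.inr ⟨v, w, e, hS, hz, rfl, rfl⟩
    · simp [hS] at hz
  · rw [hg.zD_x_base hp e] at hz
    by_cases hS : (v, w) ∈ S
    · rw [if_pos hS, mul_pos_iff_of_pos_left (hp v), neg_pos] at hz
      exact Or.inl ⟨v, w, ⟨e.1, Or.inr ⟨hS, hz⟩⟩, rfl, (if_pos hS).symm⟩
    · simp [hS] at hz
  · rw [hg.zD_x_y hp e] at hz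
    by_cases hS : (v, w) ∈ S
    · simp [hS] at hz
    · rw [if_neg hS, mul_pos_iff_of_pos_left (hp v)] at hz
      exact Or.inl ⟨v, w, ⟨e.1, Or.inl ⟨hS, hz⟩⟩, rfl, (if_neg hS).symm⟩
  · rw [hg.zD_z hp e] at hz
    exact absurd hz (lt_irrefl 0)
  · simp [zD, rD] at hz

theorem Flippable.gadgetState_symmDiff (h : Flippable n π S v w) (hg : GadgetState n π S) :
    GadgetState n π (symmDiff S {(v, w)}) where
  toAdmissiblePolicy := hg.toAdmissiblePolicy
  active_mem u hu hs := by
    have hne : (u, π u) ≠ (v, w) := by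
      rintro ⟨⟩
      exact h.zB_ne_zero (hg.zB_apply hu)
    exact Set.mem_symmDiff.2 (Or.inl ⟨hg.active_mem u hu hs, hne⟩)

theorem GadgetState.update (hg : GadgetState n π S) (e : BEdge n v w) (hS : (v, w) ∈ S)
    (hz : 0 < zB n π v w) : GadgetState n (Function.update π v w) S where
  toAdmissiblePolicy := hg.toAdmissiblePolicy.update e hz
  active_mem u hu hs := by
    by_cases huv : u = v
    · subst huv; rwa [Function.update_self]
    · rw [Function.update_of_ne huv]; exact hg.active_mem u hu hs

theorem mem_BVSet : v ∈ BVSet n ↔ IsBVertex n v := by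
  cases v <;> simp [BVSet, IsBVertex]

theorem base_mem_DAgentSet (h : IsBVertex n v) : DV.base v ∈ DAgentSet n := by
  simp [DAgentSet, mem_BVSet, h]

theorem x_mem_DAgentSet (h : DEdgePair n v w) : DV.x v w ∈ DAgentSet n := by
  simp [DAgentSet, mem_BVSet, h, isBVertex_source h.1, isBVertex_target h.1]

theorem LIobj_symmDiff (h : Flippable n π S v w) (hg : GadgetState n π S) (hp : ∀ v, 0 < p v) :
    LIobj n p (gadgetPolicy π (symmDiff S {(v, w)})) =
      LIobj n p (gadgetPolicy π S) + p v * |zB n π v w| := by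
  have e := h.dEdgePair
  have hx := x_mem_DAgentSet e
  rw [LIobj, LIobj, hg.DVal_eq hp, (h.gadgetState_symmDiff hg).DVal_eq hp,
    ← Finset.sum_erase_add _ _ hx, ← Finset.sum_erase_add (DAgentSet n) _ hx, add_assoc]
  refine congrArg₂ (· + ·) (Finset.sum_congr rfl fun u hu => ?_) ?_
  · cases u with
    | x a b =>
      have hne : (a, b) ≠ (v, w) := by rintro ⟨⟩; exact Finset.ne_of_mem_erase hu rfl
      have hmem := mem_symmDiff_singleton_of_ne (A := S) hne
      by_cases hS : (a, b) ∈ S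
      · simp only [gadgetVal, hmem.2 hS, hS, if_true]
      · simp only [gadgetVal, mt hmem.1 hS, hS, if_false]
    | _ => rfl
  · rcases h.2 with ⟨hS, hz⟩ | ⟨hS, hz⟩
    · have hmem : (v, w) ∈ symmDiff S {(v, w)} := Or.inr ⟨rfl, hS⟩
      rw [abs_of_pos hz]
      simp only [gadgetVal, e, hS, hmem, zB, if_true, if_false]
      ring
    · have hmem : (v, w) ∉ symmDiff S {(v, w)} := by simp [Set.mem_symmDiff, hS]
      rw [abs_of_neg hz]
      simp only [gadgetVal, e, hS, hmem, zB, if_true, if_false]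
      ring

theorem LIobj_add_zB_le_update (hg : GadgetState n π S) (hp0 : ∀ v, 0 < p v)
    (hp1 : ∀ v, p v ≤ 1) (e : BEdge n v w) (hS : (v, w) ∈ S) (hz : 0 < zB n π v w) :
    LIobj n p (gadgetPolicy π S) + zB n π v w ≤
      LIobj n p (gadgetPolicy (Function.update π v w) S) := by
  have hv := base_mem_DAgentSet (isBVertex_source e)
  rw [LIobj, LIobj, hg.DVal_eq hp0, (hg.update e hS hz).DVal_eq hp0,
    ← Finset.sum_erase_add _ _ hv, ← Finset.sum_erase_add (DAgentSet n) _ hv, add_assoc]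
  refine add_le_add (Finset.sum_le_sum fun u _ => gadgetVal_mono hp0 hp1
    (fun a ha => hg.BVal_le_update e hz ha) u) ?_
  simp only [gadgetVal, isBVertex_source e, if_true]
  rw [hg.BVal_update_self e (hg.not_reaches e hz), zB]
  linarith

end Switches

/-! ## Steps of the Largest Increase rule -/

section Steps

variable {n : ℕ} {π : BV → BV} {S : Set (BV × BV)} {u v w : BV} {f : DV → DV}

theorem pSpec_pos (n : ℕ) (v : BV) : 0 < pSpec n v := zpow_pos two_pos _

theorem pSpec_le_one (n : ℕ) (v : BV) : pSpec n v ≤ 1 :=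
  zpow_le_one_of_nonpos₀ one_le_two (by omega)

theorem pSpec_mul_two_pow_lt {k : ℕ} (h : k < NV n v) :
    pSpec n v * 2 ^ (n + 2) < 2 ^ (-((k * (n + 5) : ℕ) : ℤ)) * (1 / 4) := by
  have hexp : k * (n + 5) + (n + 5) ≤ NV n v * (n + 5) := by
    rw [← Nat.succ_mul]; exact Nat.mul_le_mul_right _ h
  have hquarter : (1 / 4 : ℚ) = 2 ^ (-2 : ℤ) := by norm_num
  rw [pSpec, hquarter, ← zpow_natCast, ← zpow_add₀ two_ne_zero, ← zpow_add₀ two_ne_zero]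
  exact zpow_lt_zpow_right₀ one_lt_two (by omega)

theorem pSpec_mul_two_pow_lt_of_NV_lt (h : NV n u < NV n v) :
    pSpec n v * 2 ^ (n + 2) < pSpec n u * (1 / 4) :=
  pSpec_mul_two_pow_lt h

theorem pSpec_mul_two_pow_lt_quarter (n : ℕ) (hv : IsBVertex n v) :
    pSpec n v * 2 ^ (n + 2) < 1 / 4 := by
  have hNV : 0 < NV n v := by cases v <;> simp only [NV, IsBVertex] at * <;> omega
  simpa using pSpec_mul_two_pow_lt hNV

theorem exists_flip_of_liStep (h : LIStep n (pSpec n) (gadgetPolicy π S) f)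
    (hg : GadgetState n π S) (hS : ∀ v w, BEdge n v w → (v, w) ∈ S → zB n π v w ≤ 0) :
    ∃ v w, Flippable n π S v w ∧ f = gadgetPolicy π (symmDiff S {(v, w)}) ∧
      (∀ v' w', Flippable n π S v' w' → NV n v ≤ NV n v') ∧
      ∀ w', Flippable n π S v w' → |zB n π v w'| ≤ |zB n π v w| := by
  obtain ⟨u, u', himp, hmax, rfl⟩ := h
  rcases hg.dImproving_cases (pSpec_pos n) himp with
    ⟨v, w, hf, rfl, rfl⟩ | ⟨v, w, e, hmem, hz, -⟩
  · have hle : ∀ v' w', Flippable n π S v' w' →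
        pSpec n v' * |zB n π v' w'| ≤ pSpec n v * |zB n π v w| := fun v' w' hf' => by
      have := hmax _ _ (hf'.dImproving hg (pSpec_pos n))
      rw [update_gadgetPolicy_x, update_gadgetPolicy_x, LIobj_symmDiff hf hg (pSpec_pos n),
        LIobj_symmDiff hf' hg (pSpec_pos n)] at this
      exact le_of_add_le_add_left this
    refine ⟨v, w, hf, update_gadgetPolicy_x .., fun v' w' hf' => ?_,
      fun w' hf' => le_of_mul_le_mul_left (hle v w' hf') (pSpec_pos n v)⟩
    by_contra! hlt
    have hquarter := mul_le_mul_of_nonneg_left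
      (hg.quarter_le_abs_zB hf'.1 hf'.zB_ne_zero) (pSpec_pos n v').le
    have hbound := mul_le_mul_of_nonneg_left (hg.abs_zB_le hf.1) (pSpec_pos n v).le
    linarith [hle v' w' hf', pSpec_mul_two_pow_lt_of_NV_lt hlt]
  · exact absurd hz (hS v w e.1 hmem).not_gt

theorem eq_update_of_liStep (h : LIStep n (pSpec n) (gadgetPolicy π S) f) (hg : GadgetState n π S)
    (e : BEdge n v w) (hS : (v, w) ∈ S) (hz : 0 < zB n π v w)
    (huniq : ∀ v' w', BEdge n v' w' → (v', w') ∈ S → 0 < zB n π v' w' → (v', w') = (v, w)) :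
    f = gadgetPolicy (Function.update π v w) S := by
  have hvs : v ≠ BV.s := ne_s_of_not_reaches e (hg.not_reaches e hz)
  obtain ⟨u, u', himp, hmax, rfl⟩ := h
  rcases hg.dImproving_cases (pSpec_pos n) himp with
    ⟨v', w', hf, rfl, rfl⟩ | ⟨v', w', e', hmem, hz', rfl, rfl⟩
  · have hle := hmax _ _ (hg.dImproving_base (pSpec_pos n) ⟨e, hvs⟩ hS hz)
    rw [update_gadgetPolicy_x, update_gadgetPolicy_base π S hvs,
      LIobj_symmDiff hf hg (pSpec_pos n)] at hle
    have hquarter := hg.quarter_le_abs_zB e hz.ne'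
    rw [abs_of_pos hz] at hquarter
    have hbase := LIobj_add_zB_le_update hg (pSpec_pos n) (pSpec_le_one n) e hS hz
    have hbound := mul_le_mul_of_nonneg_left (hg.abs_zB_le hf.1) (pSpec_pos n v').le
    linarith [pSpec_mul_two_pow_lt_quarter n (isBVertex_source hf.1)]
  · obtain ⟨rfl, rfl⟩ := Prod.mk.inj (huniq v' w' e'.1 hmem hz')
    exact update_gadgetPolicy_base π S hvs _

end Steps

/-! ## Idle gadgets -/

section Settled

variable {n : ℕ} {π : BV → BV} {u v w x : BV}

/-- A weakening of `OptimalBelow` which, unlike that notion, persists under improving switches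
at `u` and at lower vertices: an edge below `u` may be improving, but only to a value that leads
to a negative cycle if it is ever used by an edge from `u`. -/
def SettledBelow (n : ℕ) (π : BV → BV) (u : BV) : Prop :=
  ∀ y y', BEdge n y y' → NV n y < NV n u →
    rB n y y' + BVal n π y' ≤
      max (BVal n π y) (BVal n π u + strictPotential n y - strictPotential n u)

theorem OptimalBelow.settledBelow (ho : OptimalBelow n π u) : SettledBelow n π u :=
  fun _ _ e hlt => (ho.BVal_le e hlt).trans (le_max_left _ _)

theorem SettledBelow.BVal_update_le (hset : SettledBelow n π u) (hπ : AdmissiblePolicy n π)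
    (hu : IsBVertex n u) (e : BEdge n v w) (hz : 0 < zB n π v w) (hvu : v = u ∨ NV n v < NV n u) :
    BVal n (Function.update π v w) v ≤
      BVal n (Function.update π v w) u + strictPotential n v - strictPotential n u := by
  rcases hvu with rfl | hlt
  · linarith
  · have hmono := hπ.BVal_le_update e hz hu
    have hmax := (le_max_iff.1 (hset v w e hlt)).resolve_left fun h => by unfold zB at hz; linarith
    rw [hπ.BVal_update_self e (hπ.not_reaches e hz)]
    linarith

theorem SettledBelow.BVal_update_le_of_reaches (hset : SettledBelow n π u)
    (hπ : AdmissiblePolicy n π) (hu : IsBVertex n u) (e : BEdge n v w) (hz : 0 < zB n π v w)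
    (hvu : v = u ∨ NV n v < NV n u) (hx : IsBVertex n x) (h : Reaches π x v) :
    BVal n (Function.update π v w) x ≤
      BVal n (Function.update π v w) u + strictPotential n x - strictPotential n u := by
  have hw := hπ.not_reaches e hz
  have hv := hset.BVal_update_le hπ hu e hz hvu
  have hpath := hπ.BVal_sub_le_strictPotential hx h
  rw [hπ.BVal_update_of_reaches e hw (isBVertex_source e) (Reaches.refl π v)] at hv
  rw [hπ.BVal_update_of_reaches e hw hx h]
  linarith

theorem SettledBelow.update (hset : SettledBelow n π u) (hπ : AdmissiblePolicy n π)
    (hu : IsBVertex n u) (e : BEdge n v w) (hz : 0 < zB n π v w) (hvu : v = u ∨ NV n v < NV n u) :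
    SettledBelow n (Function.update π v w) u := fun y y' ey hy => by
  have hvs : v ≠ BV.s := ne_s_of_not_reaches e (hπ.not_reaches e hz)
  by_cases h : Reaches π y' v
  · have hys : y ≠ BV.s := by
      rintro rfl
      exact hπ.not_reaches_of_s hvs (bEdge_s.1 ey ▸ h)
    have hle := hset.BVal_update_le_of_reaches hπ hu e hz hvu (isBVertex_target ey) h
    have hr := rB_lt_strictPotential_sub ey hys
    exact le_max_of_le_right (by linarith)
  · rw [BVal_update_of_not_reaches h]
    refine (hset y y' ey hy).trans (max_le_max (hπ.BVal_le_update e hz (isBVertex_source ey)) ?_)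
    linarith [hπ.BVal_le_update e hz hu]

theorem SettledBelow.zB_update_neg_of_reaches (hset : SettledBelow n π u)
    (hπ : AdmissiblePolicy n π) (e : BEdge n v w) (hz : 0 < zB n π v w)
    (hvu : v = u ∨ NV n v < NV n u) (ex : BEdge n u x) (h : Reaches π x v) :
    zB n (Function.update π v w) u x < 0 := by
  have hus : u ≠ BV.s := by
    rintro rfl
    exact hπ.not_reaches_of_s (ne_s_of_not_reaches e (hπ.not_reaches e hz)) (bEdge_s.1 ex ▸ h)
  have hle :=
    hset.BVal_update_le_of_reaches hπ (isBVertex_source ex) e hz hvu (isBVertex_target ex) h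
  have hr := rB_lt_strictPotential_sub ex hus
  unfold zB
  linarith

theorem SettledBelow.zB_update_neg (hset : SettledBelow n π u) (hπ : AdmissiblePolicy n π)
    (e : BEdge n v w) (hz : 0 < zB n π v w) (hvu : NV n v < NV n u) (ex : BEdge n u x)
    (hx : zB n π u x < 0) : zB n (Function.update π v w) u x < 0 := by
  by_cases h : Reaches π x v
  · exact hset.zB_update_neg_of_reaches hπ e hz (Or.inr hvu) ex h
  · have hmono := hπ.BVal_le_update e hz (isBVertex_source ex)
    unfold zB at hx ⊢
    rw [BVal_update_of_not_reaches h]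
    linarith

theorem SettledBelow.zB_update_self_neg (hset : SettledBelow n π v) (hπ : AdmissiblePolicy n π)
    (e : BEdge n v w) (hz : 0 < zB n π v w) (ex : BEdge n v x) (hx : zB n π v x ≤ 0) :
    zB n (Function.update π v w) v x < 0 := by
  by_cases h : Reaches π x v
  · exact hset.zB_update_neg_of_reaches hπ e hz (Or.inl rfl) ex h
  · unfold zB at hx hz ⊢
    rw [BVal_update_of_not_reaches h, hπ.BVal_update_self e (hπ.not_reaches e hz)]
    linarith

end Settled

/-! ## The invariant of the run -/

/-- The invariant of the run after `k` steps: all switched-on gadgets of inactive edges have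
negative reduced costs, which the coming switches at lower vertices cannot change, and the
counter values of `t`, and of the `a_j` to which `t` would like to switch, are at most `k`. -/
structure RunInvariant (n : ℕ) (π : BV → BV) (S : Set (BV × BV)) (k : ℕ) : Prop
    extends GadgetState n π S where
  noDirectBoarding : NoDirectBoarding n π
  idle : ∀ v w, (v, w) ∈ S → w ≠ π v → BEdge n v w → zB n π v w < 0 ∧ SettledBelow n π v
  counterVal_t_le : counterVal n π BV.t ≤ k
  counterVal_a_le : ∀ j, 1 ≤ j → j ≤ n → BVal n π BV.t < BVal n π (BV.a j) →
    counterVal n π (BV.a j) ≤ k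

section Run

variable {n k : ℕ} {π : BV → BV} {S : Set (BV × BV)} {v w : BV}

theorem RunInvariant.zB_nonpos_of_mem (hI : RunInvariant n π S k) (e : BEdge n v w)
    (h : (v, w) ∈ S) : zB n π v w ≤ 0 := by
  by_cases hw : w = π v
  · subst hw; exact (hI.zB_apply (isBVertex_source e)).le
  · exact (hI.idle v w h hw e).1.le

theorem RunInvariant.flippable_of_pos (hI : RunInvariant n π S k) (e : BEdge n v w)
    (hz : 0 < zB n π v w) : Flippable n π S v w :=
  ⟨e, Or.inl ⟨fun h => (hI.zB_nonpos_of_mem e h).not_gt hz, hz⟩⟩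

theorem RunInvariant.lowestSwitch (hI : RunInvariant n π S k) (e : BEdge n v w)
    (hz : 0 < zB n π v w) (hlow : ∀ v' w', Flippable n π S v' w' → NV n v ≤ NV n v')
    (hmax : ∀ w', Flippable n π S v w' → |zB n π v w'| ≤ |zB n π v w|) :
    LowestSwitch n π v w where
  toAdmissiblePolicy := hI.toAdmissiblePolicy
  noDirectBoarding := hI.noDirectBoarding
  optimalBelow x y exy hlt := by
    by_contra! hpos
    exact (hlow x y (hI.flippable_of_pos exy hpos)).not_gt hlt
  edge := e
  pos := hz
  max w' e' := by
    by_contra! hlt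
    have hle := hmax w' (hI.flippable_of_pos e' (hz.trans hlt))
    rw [abs_of_pos hz, abs_of_pos (hz.trans hlt)] at hle
    linarith

theorem RunInvariant.succ (hI : RunInvariant n π S k) (h : Flippable n π S v w)
    (hS : (v, w) ∈ S) : RunInvariant n π (symmDiff S {(v, w)}) (k + 1) where
  toGadgetState := h.gadgetState_symmDiff hI.toGadgetState
  noDirectBoarding := hI.noDirectBoarding
  idle u x hux := by
    rcases hux with ⟨hmem, -⟩ | ⟨heq, hnot⟩
    exacts [hI.idle u x hmem, absurd hS (heq ▸ hnot)]
  counterVal_t_le := by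
    push_cast; linarith [hI.counterVal_t_le]
  counterVal_a_le j h1 hj hlt := by
    push_cast; linarith [hI.counterVal_a_le j h1 hj hlt]

theorem RunInvariant.idle_update (hI : RunInvariant n π S k) (hs : LowestSwitch n π v w)
    (hlow : ∀ v' w', Flippable n π S v' w' → NV n v ≤ NV n v') {u x : BV} (hux : (u, x) ∈ S)
    (hx : x ≠ Function.update π v w u) (e : BEdge n u x) :
    zB n (Function.update π v w) u x < 0 ∧ SettledBelow n (Function.update π v w) u := by
  have hu := isBVertex_source e
  by_cases huv : u = v
  · subst huv
    have hset := hs.optimalBelow.settledBelow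
    exact ⟨hset.zB_update_self_neg hs.toAdmissiblePolicy hs.edge hs.pos e
        (hI.zB_nonpos_of_mem e hux),
      hset.update hs.toAdmissiblePolicy hu hs.edge hs.pos (Or.inl rfl)⟩
  · rw [Function.update_of_ne huv] at hx
    obtain ⟨hz, hset⟩ := hI.idle u x hux hx e
    have hlt : NV n v < NV n u := (hlow u x ⟨e, Or.inr ⟨hux, hz⟩⟩).lt_of_ne fun h =>
      huv (NV_inj hu (isBVertex_source hs.edge) h.symm)
    exact ⟨hset.zB_update_neg hs.toAdmissiblePolicy hs.edge hs.pos hlt e hz,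
      hset.update hs.toAdmissiblePolicy hu hs.edge hs.pos (Or.inr hlt)⟩

theorem RunInvariant.counterVal_t_update_le (hI : RunInvariant n π S k)
    (hs : LowestSwitch n π v w) : counterVal n (Function.update π v w) BV.t ≤ k + 2 := by
  by_cases hv : v = BV.t
  · subst hv
    obtain ⟨j, h1, hj, rfl⟩ := bEdge_t.1 hs.edge
    have hlt : BVal n π BV.t < BVal n π (BV.a j) := by simpa [rB] using hs.BVal_lt
    have hC := hI.counterVal_a_le j h1 hj hlt
    rw [counterVal, hs.pathSum_update_self hs.edge hs.not_reaches]
    simp only [counterReward, rB]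
    linarith
  · linarith [hs.counterVal_travel_update_le hv, hI.counterVal_t_le]

theorem RunInvariant.update (hI : RunInvariant n π S k) (h : Flippable n π S v w)
    (hs : LowestSwitch n π v w) (hlow : ∀ v' w', Flippable n π S v' w' → NV n v ≤ NV n v') :
    RunInvariant n (Function.update π v w) (symmDiff S {(v, w)}) (k + 2) where
  toGadgetState := (h.gadgetState_symmDiff hI.toGadgetState).update hs.edge
    (Or.inr ⟨rfl, fun hS => (hI.zB_nonpos_of_mem hs.edge hS).not_gt hs.pos⟩) hs.pos
  noDirectBoarding := hs.noDirectBoarding_update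
  idle u x hux hx e := by
    rcases hux with ⟨hmem, -⟩ | ⟨⟨⟩, -⟩
    · exact hI.idle_update hs hlow hmem hx e
    · simp at hx
  counterVal_t_le := by
    push_cast; exact hI.counterVal_t_update_le hs
  counterVal_a_le j h1 hj hlt := by
    by_cases hv : v = BV.t
    · subst hv
      exact absurd hlt (hs.travelOptimal_update j h1 hj).not_gt
    · push_cast
      linarith [hs.counterVal_update_le hv h1 hj hlt, hI.counterVal_t_le]

theorem RunInvariant.optimalBelow_of_terminal (hI : RunInvariant n π S k)
    (h : ∀ u u', ¬ DImproving n (pSpec n) (gadgetPolicy π S) u u') :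
    OptimalBelow n π BV.s := fun v w e _ => by
  by_contra! hz
  exact h _ _ ((hI.flippable_of_pos e hz).dImproving hI.toGadgetState (pSpec_pos n))

theorem RunInvariant.two_pow_le_of_terminal (hI : RunInvariant n π S k) (hn : 1 ≤ n)
    (h : ∀ u u', ¬ DImproving n (pSpec n) (gadgetPolicy π S) u u') : 2 ^ (n + 1) - 2 ≤ k := by
  have hC := ((hI.optimalBelow_of_terminal h).two_pow_le_counterVal hI.toProperPolicy hn).trans
    hI.counterVal_t_le
  have : (2 ^ (n + 1) : ℚ) ≤ (k + 2 : ℕ) := by push_cast; linarith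
  exact Nat.sub_le_iff_le_add.2 (by exact_mod_cast this)

theorem RunInvariant.exists_next {f f' : DV → DV} (hI : RunInvariant n π S k)
    (h : LIStep n (pSpec n) (gadgetPolicy π S) f) :
    (∃ S', f = gadgetPolicy π S' ∧ RunInvariant n π S' (k + 1)) ∨
    ((∃ u u', DImproving n (pSpec n) f u u') ∧ (LIStep n (pSpec n) f f' →
      ∃ π' S', f' = gadgetPolicy π' S' ∧ RunInvariant n π' S' (k + 2))) := by
  obtain ⟨v, w, hf, rfl, hlow, hmax⟩ :=
    exists_flip_of_liStep h hI.toGadgetState fun _ _ => hI.zB_nonpos_of_mem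
  rcases hf.2 with ⟨hS, hz⟩ | ⟨hS, -⟩
  · have hg := hf.gadgetState_symmDiff hI.toGadgetState
    have hs := hI.lowestSwitch hf.1 hz hlow hmax
    have hmem : (v, w) ∈ symmDiff S {(v, w)} := Or.inr ⟨rfl, hS⟩
    refine Or.inr ⟨⟨_, _, hg.dImproving_base (pSpec_pos n) hf.dEdgePair hmem hz⟩, fun h' =>
      ⟨_, _, eq_update_of_liStep h' hg hf.1 hmem hz fun v' w' e' hmem' hz' => ?_,
        hI.update hf hs hlow⟩⟩
    by_contra hne
    exact (hI.zB_nonpos_of_mem e' ((mem_symmDiff_singleton_of_ne hne).1 hmem')).not_gt hz'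
  · exact Or.inl ⟨_, rfl, hI.succ hf hS⟩

theorem RunInvariant.two_pow_le {f : ℕ → DV → DV} {m : ℕ} (hI : RunInvariant n π S k)
    (hn : 1 ≤ n) (hf : f k = gadgetPolicy π S) (hk : k ≤ m)
    (hstep : ∀ k < m, LIStep n (pSpec n) (f k) (f (k + 1)))
    (hterm : ∀ u u', ¬ DImproving n (pSpec n) (f m) u u') : 2 ^ (n + 1) - 2 ≤ m := by
  induction hd : m - k using Nat.strong_induction_on generalizing k π S with
  | _ d ih =>
    subst hd
    obtain rfl | hlt := hk.eq_or_lt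
    · exact hI.two_pow_le_of_terminal hn (hf ▸ hterm)
    rcases hI.exists_next (f' := f (k + 2)) (hf ▸ hstep k hlt) with
      ⟨S', hf', hI'⟩ | ⟨⟨u, u', himp⟩, hnext⟩
    · exact ih _ (by omega) hI' hf' hlt rfl
    · have hlt' : k + 1 < m := lt_of_le_of_ne hlt fun h => hterm u u' (h ▸ himp)
      obtain ⟨π', S', hf', hI'⟩ := hnext (hstep (k + 1) hlt')
      exact ih _ (by omega) hI' hf' hlt' rfl

end Run

/-! ## The initial policy -/

section Initial

variable {n : ℕ}

theorem isBPolicy_pi0 (hn : 1 ≤ n) : IsBPolicy n (pi0 n) := fun v hv => by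
  cases v with
  | t => exact bEdge_t.2 ⟨1, le_rfl, hn, rfl⟩
  | a i => exact bEdge_a.2 ⟨hv, by simp [pi0]⟩
  | b i => exact bEdge_b.2 ⟨hv, by simp [pi0]⟩
  | d => exact bEdge_d.2 rfl
  | s => exact bEdge_s.2 rfl

theorem reaches_pi0_aN {i : ℕ} (hi : i ≤ n + 1) : Reaches (pi0 n) (aN n i) BV.s := by
  induction hi using Nat.decreasingInduction with
  | self => exact ⟨0, aN_top⟩
  | of_succ i hi ih => rw [aN_of_le (by omega)]; exact Reaches.head ih

theorem properPolicy_pi0 (hn : 1 ≤ n) : ProperPolicy n (pi0 n) where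
  isBPolicy := isBPolicy_pi0 hn
  unichain v hv := by
    cases v with
    | t =>
      have h := reaches_pi0_aN (n := n) (i := 1) (by omega)
      rw [aN_of_le hn] at h
      exact Reaches.head h
    | a i => exact Reaches.head (reaches_pi0_aN (Nat.succ_le_succ hv.2))
    | b i => exact Reaches.head (reaches_pi0_aN (Nat.succ_le_succ hv.2))
    | d => exact ⟨1, rfl⟩
    | s => exact ⟨0, rfl⟩

theorem rB_pi0 (v : BV) : rB n v (pi0 n v) = 0 := by
  cases v with
  | a i => exact rB_skip
  | b i => exact rB_leave
  | _ => rfl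

theorem counterReward_pi0 (v : BV) : counterReward n v (pi0 n v) = 0 := by
  cases v with
  | a i => exact rB_skip
  | _ => rfl

theorem runInvariant_pi0 (hn : 1 ≤ n) : RunInvariant n (pi0 n) {e | e.2 = pi0 n e.1} 0 := by
  have hπ := properPolicy_pi0 hn
  have hV : ∀ v, IsBVertex n v → 0 = BVal n (pi0 n) v := fun v =>
    hπ.pathSum_unique (F := 0) rfl fun v _ _ => by simp [rB_pi0]
  have hC : ∀ v, IsBVertex n v → 0 = counterVal n (pi0 n) v := fun v =>
    hπ.pathSum_unique (F := 0) rfl fun v _ _ => by simp [counterReward_pi0]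
  exact
    { toProperPolicy := hπ
      nonneg := fun v hv => (hV v hv).le
      active_mem := fun _ _ _ => rfl
      noDirectBoarding := fun i _ _ hb => by
        simp only [pi0, aN] at hb
        split_ifs at hb
      idle := fun _ _ h hne => absurd h hne
      counterVal_t_le := by rw [← hC BV.t trivial, Nat.cast_zero]
      counterVal_a_le := fun j h1 hj _ => by rw [← hC (BV.a j) ⟨h1, hj⟩, Nat.cast_zero] }

end Initial

end LargestIncrease

/-- With probabilities `p_v = 2^{-𝒩_V(v)(n+5)}`, the Largest Increase policy iteration on
`𝔇_n` started at the twin policy of `π_0` performs at least `2^n - 1` improving switches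
before terminating. -/
theorem stmt19 (n : ℕ) (hn : 1 ≤ n)
    (f : ℕ → (DV → DV)) (m : ℕ)
    (h0 : f 0 = twin (pi0 n))
    (hstep : ∀ k < m, LIStep n (pSpec n) (f k) (f (k + 1)))
    (hterm : ∀ u u', ¬ DImproving n (pSpec n) (f m) u u') :
    2 ^ n - 1 ≤ m := by
  have hI := LargestIncrease.runInvariant_pi0 hn
  have hm := hI.two_pow_le hn (h0.trans (LargestIncrease.twin_eq_gadgetPolicy _)) m.zero_le
    hstep hterm
  have : 1 ≤ 2 ^ n := Nat.one_le_two_pow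
  rw [pow_succ] at hm
  omega
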